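/- Let $n_c = 10^{7}$, $\epsilon = 10/n_c$, $\epsilon^\star = \epsilon/100$. For every $D > 0$ there exist constants $C$ and $K_0$ with the following property. Let $f$ be a classical solution of the relativistic Vlasov–Poisson system on $[0,T]$ that is axially symmetric, i.e. $f(t, R_\theta x, R_\theta v) = f(t,x,v)$ for every rotation $R_\theta$ about the $x_3$-axis, with $\|f(s,\cdot,\cdot)\|_{L^\infty} \le D$ and $\iint (1+|v|) f(s,x,v)\,dx\,dv \le D$ for all $s \in [0,T]$. Define $\tilde M := (1+T)^{n_c^2} + \sup_{s \in [0,T]} \iint (1+|v|)^{n_c} f(s,x,v)\,dx\,dv$, assumed finite, let $M_T$ be the least nonnegative integer $k$ with $2^k \ge \tilde M^{1/(n_c - 1)}$, and assume in addition that $\sup_{s \in [0,T]} \iint (1+|x|+|v|)^{n_c} f(s,x,v)\,dx\,dv \le \tilde M$. If $M_T \ge K_0$, then $\int_0^T \int_{\mathbb{R}^3}\int_{\mathbb{R}^3} \frac{|\slashed v|^{2 + 2\epsilon^\star}}{|\slashed x|^{1 - 2\epsilon^\star}\, \sqrt{1+|v|^2}}\, f(s,x,v)\,dx\,dv\,ds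 \;\le\; C\, 2^{5 \epsilon M_T}$. -/

import Mathlib

open MeasureTheory Real Set
noncomputable section

abbrev E3 := EuclideanSpace ℝ (Fin 3)

/-- The relativistic velocity `v̂ = v / √(1+|v|²)`. -/
def vhat (v : E3) : E3 := (Real.sqrt (1 + ‖v‖ ^ 2))⁻¹ • v

/-- The spatial density `ρ(t,x) = ∫ f(t,x,v) dv`. -/
def rvpRho (f : ℝ → E3 → E3 → ℝ) (t : ℝ) (x : E3) : ℝ := ∫ v, f t x v

/-- The electric field `E(t,x) = (4π)⁻¹ ∫ (x-y) ρ(t,y)/|x-y|³ dy`. -/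
def rvpField (f : ℝ → E3 → E3 → ℝ) (t : ℝ) (x : E3) : E3 :=
  (4 * Real.pi)⁻¹ • ∫ y, (rvpRho f t y / ‖x - y‖ ^ 3) • (x - y)

/-- `f` is a classical solution of the relativistic Vlasov–Poisson system on the
time interval `I`: it is nonnegative, `C¹`, and satisfies the transport equation
`∂ₜ f + v̂ ⋅ ∇ₓ f + E ⋅ ∇ᵥ f = 0` pointwise (phrased as the vanishing of the
derivative of `f` in the direction `(1, v̂, E(t,x))`). -/
def IsRVPSolution (I : Set ℝ) (f : ℝ → E3 → E3 → ℝ) : Prop :=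
  (∀ t ∈ I, ∀ x v, 0 ≤ f t x v) ∧
  ContDiffOn ℝ 1 (fun p : ℝ × E3 × E3 => f p.1 p.2.1 p.2.2) (I ×ˢ (Set.univ : Set (E3 × E3))) ∧
  ∀ t ∈ I, ∀ x v,
    fderivWithin ℝ (fun p : ℝ × E3 × E3 => f p.1 p.2.1 p.2.2)
      (I ×ˢ (Set.univ : Set (E3 × E3))) (t, x, v) (1, vhat v, rvpField f t x) = 0

/-- Rotation by angle `θ` about the `x₃`-axis. -/
def rotZ (θ : ℝ) (x : E3) : E3 :=
  !₂[x 0 * Real.cos θ - x 1 * Real.sin θ, x 0 * Real.sin θ + x 1 * Real.cos θ, x 2]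

/-- The norm `|x̸|` of the horizontal projection `x̸ = (x₁, x₂)`. -/
def slashN (x : E3) : ℝ := Real.sqrt (x 0 ^ 2 + x 1 ^ 2)

/-- The constant `n_c = 10⁷`, as a real number. -/
def ncR : ℝ := 10 ^ 7

/-- The constant `ε = 10 / n_c`. -/
def epsC : ℝ := 10 / 10 ^ 7

/-- The constant `ε⋆ = ε / 100`. -/
def epsStar : ℝ := epsC / 100

/-- The `n_c`-th velocity moment `M_{n_c}(s)`, with `n_c = 10⁷`. -/
def momentNc (f : ℝ → E3 → E3 → ℝ) (s : ℝ) : ℝ :=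
  ∫ p : E3 × E3, (1 + ‖p.2‖) ^ (10 ^ 7 : ℕ) * f s p.1 p.2

/-- The enlarged moment `\tilde M^c(t) = (1+t)^{n_c²} + sup_{s ∈ [0,t]} M_{n_c}(s)`. -/
def tildeMc (f : ℝ → E3 → E3 → ℝ) (t : ℝ) : ℝ :=
  (1 + t) ^ (10 ^ 14 : ℕ) + sSup (momentNc f '' Set.Icc 0 t)

/-!
For `0 < δ < 1` consider the virial `∬ x̸ ⋅ v̸ / |x̸|^{1-δ} f dx dv`. Its time derivative contains
the transport term `∬ v̂ ⋅ ∇ₓ(x̸ ⋅ v̸ / |x̸|^{1-δ}) f`, which is at least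
`δ ∬ |v̸|² / (|x̸|^{1-δ} √(1+|v|²)) f`, and the force term `∫ ρ E ⋅ u` with
`u(x) = x̸ / |x̸|^{1-δ}`. The field `u` is the gradient of a convex function, hence monotone, and
the Coulomb force is repulsive, so exchanging the two particles in
`∬ ρ(x) ρ(y) (x - y) ⋅ u(x) / |x - y|³` shows that the force term is nonnegative. The virial itself
is at most `∬ |x|^δ |v| f`, so integrating in time bounds the space–time integral of
`|v̸|² / (|x̸|^{1-δ} √(1+|v|²)) f`; to make this rigorous `|x̸|` is replaced by `√(η² + |x̸|²)`, and
`η → 0` by Fatou's lemma. The remaining factor `|v̸|^δ` is bounded by a power of `2^{M_T}` where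
`|v̸|` is at most `2^{2 M_T}`; elsewhere the high moments of `f` give the decay, up to a
neighbourhood of the axis where `f ≤ D` and the singularity is integrable.
-/

open Filter Topology
open scoped InnerProductSpace

/-! ### Singular kernels -/

section SingularKernel

variable {E : Type*} [NormedAddCommGroup E]

/-- The power singularity `‖z‖⁻ᵃ`, truncated to the unit ball so that it is integrable as soon as
`a` is smaller than the dimension. -/
def singularKernel (a : ℝ) (z : E) : ℝ := (Metric.ball 0 1).indicator (fun z => ‖z‖ ^ (-a)) z

theorem singularKernel_nonneg (a : ℝ) (z : E) : 0 ≤ singularKernel a z :=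
  indicator_nonneg (fun _ _ => by positivity) z

theorem integrable_singularKernel [NormedSpace ℝ E] [FiniteDimensional ℝ E] [Nontrivial E]
    [MeasurableSpace E] [BorelSpace E] (μ : Measure E) [μ.IsAddHaarMeasure] {a : ℝ}
    (ha : a < Module.finrank ℝ E) : Integrable (singularKernel a) μ := by
  refine (integrable_indicator_iff measurableSet_ball).2
    (integrableOn_ball_of_norm_le_rpow (C := 1) Module.finrank_pos ha
      (.of_forall fun z => ?_) (measurable_norm.pow_const _).aestronglyMeasurable)
  rw [one_mul, Real.norm_of_nonneg (by positivity)]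

theorem rpow_neg_le_singularKernel_div_add_pow {a b u : ℝ} {c : ℕ} (hb : 0 ≤ b)
    (habc : b * (1 + c) ≤ a * c) (hu : 1 ≤ u) (z : E) :
    ‖z‖ ^ (-b) ≤ singularKernel a z / u + u ^ c := by
  have hk : 0 ≤ singularKernel a z / u := div_nonneg (singularKernel_nonneg a z) (by linarith)
  rcases le_or_gt (‖z‖ ^ (-b)) (u ^ c) with hle | hlt
  · linarith
  have hone : 1 < ‖z‖ ^ (-b) := (one_le_pow₀ hu).trans_lt hlt
  have hz : 0 < ‖z‖ := by
    refine (norm_nonneg z).lt_of_ne fun h0 => hone.not_ge ?_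
    rw [← h0]
    exact Real.zero_rpow_le_one _
  have hz1 : ‖z‖ < 1 := by
    by_contra! h
    exact hone.not_ge (Real.rpow_le_one_of_one_le_of_nonpos h (by linarith))
  have hc : c ≠ 0 := by
    rintro rfl
    have hb0 : b = 0 := by norm_num at habc; linarith
    simp [hb0] at hone
  have hpow : (‖z‖ ^ (-b) * u) ^ c ≤ (‖z‖ ^ (-a)) ^ c :=
    calc (‖z‖ ^ (-b) * u) ^ c ≤ (‖z‖ ^ (-b)) ^ c * ‖z‖ ^ (-b) := by
          rw [mul_pow]; gcongr
      _ = ‖z‖ ^ (-(b * (1 + c))) := by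
          rw [← Real.rpow_mul_natCast hz.le, ← Real.rpow_add hz]; ring_nf
      _ ≤ ‖z‖ ^ (-(a * c)) := Real.rpow_le_rpow_of_exponent_ge hz hz1.le (by linarith)
      _ = (‖z‖ ^ (-a)) ^ c := by rw [← Real.rpow_mul_natCast hz.le]; ring_nf
  have hkernel : singularKernel a z = ‖z‖ ^ (-a) := indicator_of_mem (mem_ball_zero_iff.2 hz1) _
  have : ‖z‖ ^ (-b) ≤ singularKernel a z / u := by
    rw [hkernel, le_div_iff₀ (by linarith)]
    exact le_of_pow_le_pow_left₀ hc (by positivity) hpow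
  linarith [pow_nonneg (zero_le_one.trans hu) c]

end SingularKernel

/-! ### The Coulomb field of a spatial density -/

/-- The Coulomb field `x ↦ (4π)⁻¹ ∫ (x - y) ρ(y) / |x - y|³ dy`, of which `rvpField f t` is the case
`ρ = rvpRho f t`. -/
def coulombField (ρ : E3 → ℝ) (x : E3) : E3 :=
  (4 * π)⁻¹ • ∫ y, (ρ y / ‖x - y‖ ^ 3) • (x - y)

/-- Charge densities with a finite first moment and with `∫ ρ(y) / |x - y|² dy ≤ K` for all `x`,
so that the Coulomb field is bounded by `K`. -/
structure IsCoulombDensity (K : ℝ) (ρ : E3 → ℝ) : Prop where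
  measurable : Measurable ρ
  nonneg : ∀ x, 0 ≤ ρ x
  integrable_moment : Integrable fun x => (1 + ‖x‖) * ρ x
  integrable_inv_sq : ∀ x, Integrable fun y => ρ y * (‖x - y‖ ^ 2)⁻¹
  integral_inv_sq_le : ∀ x, ∫ y, ρ y * (‖x - y‖ ^ 2)⁻¹ ≤ K

/-- The power exerted by the charge at `z.2` on the charge at `z.1` when the latter moves with
velocity `u z.1`, up to the factor `4π`. -/
def interactionPower (ρ : E3 → ℝ) (u : E3 → E3) (z : E3 × E3) : ℝ :=
  ρ z.1 * ⟪(ρ z.2 / ‖z.1 - z.2‖ ^ 3) • (z.1 - z.2), u z.1⟫_ℝ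

theorem integral_nonneg_of_add_swap_nonneg {α : Type*} [MeasurableSpace α] {μ : Measure α}
    [SFinite μ] {H : α × α → ℝ} (hH : Integrable H (μ.prod μ)) (hsymm : ∀ z, 0 ≤ H z + H z.swap) :
    0 ≤ ∫ z, H z ∂(μ.prod μ) := by
  have hswap : ∫ z, H z.swap ∂(μ.prod μ) = ∫ z, H z ∂(μ.prod μ) := integral_prod_swap H
  have hsum : ∫ z, (H z + H z.swap) ∂(μ.prod μ) =
      (∫ z, H z ∂(μ.prod μ)) + ∫ z, H z.swap ∂(μ.prod μ) := integral_add hH hH.swap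
  have hnonneg : 0 ≤ ∫ z, (H z + H z.swap) ∂(μ.prod μ) := integral_nonneg hsymm
  linarith

namespace IsCoulombDensity

variable {K : ℝ} {ρ : E3 → ℝ} {u : E3 → E3}

theorem norm_integrand (h : IsCoulombDensity K ρ) (x y : E3) :
    ‖(ρ y / ‖x - y‖ ^ 3) • (x - y)‖ = ρ y * (‖x - y‖ ^ 2)⁻¹ := by
  have hρ := h.nonneg y
  rw [norm_smul, Real.norm_of_nonneg (by positivity)]
  rcases eq_or_ne ‖x - y‖ 0 with h0 | h0
  · simp [h0]
  · field_simp

theorem measurable_integrand (h : IsCoulombDensity K ρ) :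
    Measurable fun z : E3 × E3 => (ρ z.2 / ‖z.1 - z.2‖ ^ 3) • (z.1 - z.2) := by
  have := h.measurable
  fun_prop

theorem integrable_integrand (h : IsCoulombDensity K ρ) (x : E3) :
    Integrable fun y => (ρ y / ‖x - y‖ ^ 3) • (x - y) :=
  (h.integrable_inv_sq x).mono'
    (h.measurable_integrand.comp measurable_prodMk_left).aestronglyMeasurable
    (.of_forall fun y => (h.norm_integrand x y).le)

theorem measurable_coulombField (h : IsCoulombDensity K ρ) : Measurable (coulombField ρ) :=
  (h.measurable_integrand.stronglyMeasurable.integral_prod_right'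
    (ν := (volume : Measure E3))).measurable.const_smul (4 * π)⁻¹

theorem norm_coulombField_le (h : IsCoulombDensity K ρ) (x : E3) : ‖coulombField ρ x‖ ≤ K := by
  have hpi : (4 * π)⁻¹ ≤ 1 := inv_le_one_of_one_le₀ (by linarith [Real.pi_gt_three])
  calc ‖coulombField ρ x‖ = (4 * π)⁻¹ * ‖∫ y, (ρ y / ‖x - y‖ ^ 3) • (x - y)‖ := by
        rw [coulombField, norm_smul, Real.norm_of_nonneg (by positivity)]
    _ ≤ ‖∫ y, (ρ y / ‖x - y‖ ^ 3) • (x - y)‖ := mul_le_of_le_one_left (norm_nonneg _) hpi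
    _ ≤ ∫ y, ‖(ρ y / ‖x - y‖ ^ 3) • (x - y)‖ := norm_integral_le_integral_norm _
    _ = ∫ y, ρ y * (‖x - y‖ ^ 2)⁻¹ := by simp only [h.norm_integrand]
    _ ≤ K := h.integral_inv_sq_le x

theorem norm_interactionPower_le (h : IsCoulombDensity K ρ) (hle : ∀ x, ‖u x‖ ≤ 1 + ‖x‖)
    (x y : E3) :
    ‖interactionPower ρ u (x, y)‖ ≤ (1 + ‖x‖) * ρ x * (ρ y * (‖x - y‖ ^ 2)⁻¹) := by
  have hy : 0 ≤ ρ y * (‖x - y‖ ^ 2)⁻¹ := mul_nonneg (h.nonneg y) (by positivity)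
  calc ‖interactionPower ρ u (x, y)‖
      = ρ x * ‖⟪(ρ y / ‖x - y‖ ^ 3) • (x - y), u x⟫_ℝ‖ := by
        rw [interactionPower, norm_mul, Real.norm_of_nonneg (h.nonneg x)]
    _ ≤ ρ x * (ρ y * (‖x - y‖ ^ 2)⁻¹ * (1 + ‖x‖)) := by
        refine mul_le_mul_of_nonneg_left ((norm_inner_le_norm _ _).trans ?_) (h.nonneg x)
        rw [h.norm_integrand]
        exact mul_le_mul_of_nonneg_left (hle x) hy
    _ = (1 + ‖x‖) * ρ x * (ρ y * (‖x - y‖ ^ 2)⁻¹) := by ring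

theorem integrable_interactionPower (h : IsCoulombDensity K ρ) (hu : Measurable u)
    (hle : ∀ x, ‖u x‖ ≤ 1 + ‖x‖) : Integrable (interactionPower ρ u) (volume.prod volume) := by
  have hmeas : Measurable (interactionPower ρ u) :=
    (h.measurable.comp measurable_fst).mul
      (h.measurable_integrand.inner (hu.comp measurable_fst))
  have hslice (x : E3) : Integrable fun y => interactionPower ρ u (x, y) :=
    ((h.integrable_integrand x).inner_const (u x)).const_mul (ρ x)
  refine (integrable_prod_iff hmeas.aestronglyMeasurable).2 ⟨.of_forall hslice, ?_⟩
  refine (h.integrable_moment.mul_const K).mono'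
    (hmeas.norm.stronglyMeasurable.integral_prod_right').aestronglyMeasurable
    (.of_forall fun x => ?_)
  have hw : 0 ≤ (1 + ‖x‖) * ρ x := mul_nonneg (by positivity) (h.nonneg x)
  calc ‖∫ y, ‖interactionPower ρ u (x, y)‖‖ = ∫ y, ‖interactionPower ρ u (x, y)‖ :=
        Real.norm_of_nonneg (integral_nonneg fun _ => norm_nonneg _)
    _ ≤ ∫ y, (1 + ‖x‖) * ρ x * (ρ y * (‖x - y‖ ^ 2)⁻¹) :=
        integral_mono (hslice x).norm ((h.integrable_inv_sq x).const_mul _)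
          (h.norm_interactionPower_le hle x)
    _ = (1 + ‖x‖) * ρ x * ∫ y, ρ y * (‖x - y‖ ^ 2)⁻¹ := integral_const_mul _ _
    _ ≤ (1 + ‖x‖) * ρ x * K := mul_le_mul_of_nonneg_left (h.integral_inv_sq_le x) hw

theorem interactionPower_add_swap_nonneg (h : IsCoulombDensity K ρ)
    (hmono : ∀ x y, 0 ≤ ⟪x - y, u x - u y⟫_ℝ) (z : E3 × E3) :
    0 ≤ interactionPower ρ u z + interactionPower ρ u z.swap := by
  have hsum : interactionPower ρ u z + interactionPower ρ u z.swap =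
      ρ z.1 * ρ z.2 / ‖z.1 - z.2‖ ^ 3 * ⟪z.1 - z.2, u z.1 - u z.2⟫_ℝ := by
    simp only [interactionPower, Prod.fst_swap, Prod.snd_swap, real_inner_smul_left,
      norm_sub_rev z.2 z.1, inner_sub_left, inner_sub_right]
    ring
  rw [hsum]
  exact mul_nonneg (div_nonneg (mul_nonneg (h.nonneg _) (h.nonneg _)) (by positivity)) (hmono _ _)

/-- Since the Coulomb force is repulsive, after symmetrization each pair of charges contributes a
nonnegative multiple of `⟪x - y, u x - u y⟫`. -/
theorem integral_inner_coulombField_nonneg (h : IsCoulombDensity K ρ) (hu : Measurable u)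
    (hle : ∀ x, ‖u x‖ ≤ 1 + ‖x‖) (hmono : ∀ x y, 0 ≤ ⟪x - y, u x - u y⟫_ℝ) :
    0 ≤ ∫ x, ρ x * ⟪coulombField ρ x, u x⟫_ℝ := by
  have hH := h.integrable_interactionPower hu hle
  have hslice (x : E3) : ρ x * ⟪coulombField ρ x, u x⟫_ℝ =
      (4 * π)⁻¹ * ∫ y, interactionPower ρ u (x, y) := by
    have hinner : ⟪∫ y, (ρ y / ‖x - y‖ ^ 3) • (x - y), u x⟫_ℝ =
        ∫ y, ⟪(ρ y / ‖x - y‖ ^ 3) • (x - y), u x⟫_ℝ := by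
      simp only [real_inner_comm (u x)]
      exact (integral_inner (h.integrable_integrand x) (u x)).symm
    simp only [coulombField, interactionPower]
    rw [integral_const_mul, real_inner_smul_left, hinner]
    ring
  simp only [hslice]
  rw [integral_const_mul, ← integral_prod _ hH]
  exact mul_nonneg (by positivity)
    (integral_nonneg_of_add_swap_nonneg hH (h.interactionPower_add_swap_nonneg hmono))

end IsCoulombDensity

/-! ### Phase-space densities with finite moments -/

/-- The phase-space weight `1 + |x| + |v|`. -/
def phaseWeight (p : E3 × E3) : ℝ := 1 + ‖p.1‖ + ‖p.2‖

theorem one_le_phaseWeight (p : E3 × E3) : 1 ≤ phaseWeight p := by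
  unfold phaseWeight
  linarith [norm_nonneg p.1, norm_nonneg p.2]

theorem one_add_norm_fst_le_phaseWeight (p : E3 × E3) : 1 + ‖p.1‖ ≤ phaseWeight p := by
  unfold phaseWeight
  linarith [norm_nonneg p.2]

theorem one_add_norm_snd_le_phaseWeight (p : E3 × E3) : 1 + ‖p.2‖ ≤ phaseWeight p := by
  unfold phaseWeight
  linarith [norm_nonneg p.1]

theorem continuous_phaseWeight : Continuous phaseWeight := by
  unfold phaseWeight
  fun_prop

/-- An integrable kernel dominating, for bounded densities, the part of the Coulomb singularity at
`x` that is not controlled by moments: the particles `p` that are close to `x` and slow. -/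
def closeKernel (x : E3) (p : E3 × E3) : ℝ :=
  singularKernel (5 / 2) (x - p.1) * (1 + ‖p.2‖) ^ (-4 : ℝ)

theorem closeKernel_nonneg (x : E3) (p : E3 × E3) : 0 ≤ closeKernel x p :=
  mul_nonneg (singularKernel_nonneg _ _) (by positivity)

theorem integrable_closeKernel (x : E3) : Integrable (closeKernel x) :=
  ((integrable_singularKernel volume (by norm_num)).comp_sub_left x).mul_prod
    (integrable_one_add_norm (by norm_num))

theorem integral_closeKernel (x : E3) : ∫ p, closeKernel x p = ∫ p, closeKernel 0 p := by
  have hprod (x : E3) : ∫ p, closeKernel x p =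
      (∫ z : E3, singularKernel (5 / 2) z) * ∫ w : E3, (1 + ‖w‖) ^ (-4 : ℝ) := by
    rw [← integral_sub_left_eq_self _ volume x]
    exact integral_prod_mul (fun y : E3 => singularKernel (5 / 2) (x - y))
      (fun w : E3 => (1 + ‖w‖) ^ (-4 : ℝ))
  rw [hprod, hprod]

theorem inv_sq_le_closeKernel_add_phaseWeight_pow (x : E3) (p : E3 × E3) :
    (‖x - p.1‖ ^ 2)⁻¹ ≤ closeKernel x p + phaseWeight p ^ 16 := by
  have hv : 1 ≤ 1 + ‖p.2‖ := by linarith [norm_nonneg p.2]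
  calc (‖x - p.1‖ ^ 2)⁻¹ = ‖x - p.1‖ ^ (-2 : ℝ) := by
        rw [Real.rpow_neg (norm_nonneg _), Real.rpow_two]
    _ ≤ singularKernel (5 / 2) (x - p.1) / (1 + ‖p.2‖) ^ 4 + ((1 + ‖p.2‖) ^ 4) ^ 4 :=
        rpow_neg_le_singularKernel_div_add_pow (by norm_num) (by norm_num) (one_le_pow₀ hv) _
    _ = closeKernel x p + (1 + ‖p.2‖) ^ 16 := by
        rw [closeKernel, Real.rpow_neg (by positivity), div_eq_mul_inv, ← pow_mul]
        norm_cast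
    _ ≤ closeKernel x p + phaseWeight p ^ 16 := by
        gcongr
        exact one_add_norm_snd_le_phaseWeight p

/-- Continuous phase-space densities with values in `[0, D]` and sixteenth moment at most `m`. The
order sixteen is what the bound of `inv_sq_le_closeKernel_add_phaseWeight_pow` requires. -/
structure IsPhaseDensity (D m : ℝ) (g : E3 × E3 → ℝ) : Prop where
  continuous : Continuous g
  nonneg : ∀ p, 0 ≤ g p
  le_bound : ∀ p, g p ≤ D
  integrable_moment : Integrable fun p => phaseWeight p ^ 16 * g p
  integral_moment_le : ∫ p, phaseWeight p ^ 16 * g p ≤ m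

/-- The spatial density of a phase-space density. -/
def spatialDensity (g : E3 × E3 → ℝ) (x : E3) : ℝ := ∫ v, g (x, v)

/-- A bound for the Coulomb field of a phase-space density with values in `[0, D]` and sixteenth
moment at most `m`. -/
def fieldBound (D m : ℝ) : ℝ := m + D * ∫ p, closeKernel 0 p

namespace IsPhaseDensity

variable {D m : ℝ} {g : E3 × E3 → ℝ}

theorem norm_mul_le (h : IsPhaseDensity D m g) {a c : ℝ} {p : E3 × E3}
    (ha : |a| ≤ c * phaseWeight p ^ 16) : ‖a * g p‖ ≤ c * (phaseWeight p ^ 16 * g p) := by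
  rw [norm_mul, Real.norm_eq_abs, Real.norm_of_nonneg (h.nonneg p), ← mul_assoc]
  exact mul_le_mul_of_nonneg_right ha (h.nonneg p)

theorem integrable_mul_of_le (h : IsPhaseDensity D m g) {w : E3 × E3 → ℝ} (hw : Measurable w)
    {c : ℝ} (hc : ∀ p, |w p| ≤ c * phaseWeight p ^ 16) : Integrable fun p => w p * g p :=
  (h.integrable_moment.const_mul c).mono' (hw.mul h.continuous.measurable).aestronglyMeasurable
    (.of_forall fun p => h.norm_mul_le (hc p))

theorem abs_integral_mul_le (h : IsPhaseDensity D m g) {w : E3 × E3 → ℝ} {c : ℝ} (hc0 : 0 ≤ c)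
    (hc : ∀ p, |w p| ≤ c * phaseWeight p ^ 16) : |∫ p, w p * g p| ≤ c * m :=
  calc |∫ p, w p * g p| ≤ ∫ p, c * (phaseWeight p ^ 16 * g p) :=
        norm_integral_le_of_norm_le (f := fun p => w p * g p) (h.integrable_moment.const_mul c)
          (.of_forall fun p => h.norm_mul_le (hc p))
    _ = c * ∫ p, phaseWeight p ^ 16 * g p := integral_const_mul _ _
    _ ≤ c * m := mul_le_mul_of_nonneg_left h.integral_moment_le hc0

theorem tendsto_integral_mul (h : IsPhaseDensity D m g) {w : ℕ → E3 × E3 → ℝ}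
    {w' : E3 × E3 → ℝ} {c : ℝ} (hw : ∀ n, Measurable (w n))
    (hc : ∀ n p, |w n p| ≤ c * phaseWeight p ^ 16)
    (hlim : ∀ p, Tendsto (fun n => w n p) atTop (𝓝 (w' p))) :
    Tendsto (fun n => ∫ p, w n p * g p) atTop (𝓝 (∫ p, w' p * g p)) :=
  tendsto_integral_of_dominated_convergence (fun p => c * (phaseWeight p ^ 16 * g p))
    (fun n => ((hw n).mul h.continuous.measurable).aestronglyMeasurable)
    (h.integrable_moment.const_mul c) (fun n => .of_forall fun p => h.norm_mul_le (hc n p))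
    (.of_forall fun p => (hlim p).mul_const _)

theorem inv_sq_mul_le (h : IsPhaseDensity D m g) (x : E3) (p : E3 × E3) :
    g p * (‖x - p.1‖ ^ 2)⁻¹ ≤ phaseWeight p ^ 16 * g p + D * closeKernel x p := by
  have hsing := mul_le_mul_of_nonneg_left (inv_sq_le_closeKernel_add_phaseWeight_pow x p)
    (h.nonneg p)
  have hclose := mul_le_mul_of_nonneg_right (h.le_bound p) (closeKernel_nonneg x p)
  linarith

theorem integrable_inv_sq (h : IsPhaseDensity D m g) (x : E3) :
    Integrable fun p : E3 × E3 => g p * (‖x - p.1‖ ^ 2)⁻¹ := by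
  have hg := h.continuous.measurable
  refine (h.integrable_moment.add ((integrable_closeKernel x).const_mul D)).mono'
    (Measurable.aestronglyMeasurable (by fun_prop)) (.of_forall fun p => ?_)
  rw [Real.norm_of_nonneg (mul_nonneg (h.nonneg p) (by positivity))]
  exact h.inv_sq_mul_le x p

theorem integral_inv_sq_le (h : IsPhaseDensity D m g) (x : E3) :
    ∫ p : E3 × E3, g p * (‖x - p.1‖ ^ 2)⁻¹ ≤ fieldBound D m := by
  have hclose := (integrable_closeKernel x).const_mul D
  calc ∫ p : E3 × E3, g p * (‖x - p.1‖ ^ 2)⁻¹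
      ≤ ∫ p, (phaseWeight p ^ 16 * g p + D * closeKernel x p) :=
        integral_mono (h.integrable_inv_sq x) (h.integrable_moment.add hclose) (h.inv_sq_mul_le x)
    _ = (∫ p, phaseWeight p ^ 16 * g p) + D * ∫ p, closeKernel 0 p := by
        rw [integral_add h.integrable_moment hclose, integral_const_mul, integral_closeKernel]
    _ ≤ fieldBound D m := by
        unfold fieldBound
        gcongr
        exact h.integral_moment_le

theorem isCoulombDensity (h : IsPhaseDensity D m g) :
    IsCoulombDensity (fieldBound D m) (spatialDensity g) where
  measurable := (h.continuous.stronglyMeasurable.integral_prod_right' (ν := volume)).measurable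
  nonneg x := integral_nonneg fun _ => h.nonneg _
  integrable_moment := by
    have hle (p : E3 × E3) : |1 + ‖p.1‖| ≤ 1 * phaseWeight p ^ 16 := by
      rw [one_mul, abs_of_nonneg (by positivity)]
      exact (one_add_norm_fst_le_phaseWeight p).trans
        (le_self_pow₀ (one_le_phaseWeight p) (by norm_num))
    simpa only [spatialDensity, integral_const_mul] using
      (h.integrable_mul_of_le (by fun_prop) hle).integral_prod_left
  integrable_inv_sq x := by
    simpa only [spatialDensity, integral_mul_const] using (h.integrable_inv_sq x).integral_prod_left
  integral_inv_sq_le x := by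
    have hfubini := integral_prod _ (h.integrable_inv_sq x)
    simp only [integral_mul_const] at hfubini
    exact hfubini.symm.trans_le (h.integral_inv_sq_le x)

theorem integrable_inner_coulombField (h : IsPhaseDensity D m g) {u : E3 → E3}
    (hu : Measurable u) (hle : ∀ x, ‖u x‖ ≤ 1 + ‖x‖) :
    Integrable fun p : E3 × E3 => ⟪coulombField (spatialDensity g) p.1, u p.1⟫_ℝ * g p := by
  have hρ := h.isCoulombDensity
  refine h.integrable_mul_of_le (c := fieldBound D m) ((hρ.measurable_coulombField.comp
    measurable_fst).inner (hu.comp measurable_fst)) fun p => ?_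
  have hu' : ‖u p.1‖ ≤ phaseWeight p ^ 16 :=
    ((hle p.1).trans (one_add_norm_fst_le_phaseWeight p)).trans
      (le_self_pow₀ (one_le_phaseWeight p) (by norm_num))
  exact (abs_real_inner_le_norm _ _).trans (mul_le_mul (hρ.norm_coulombField_le _) hu'
    (norm_nonneg _) ((norm_nonneg _).trans (hρ.norm_coulombField_le 0)))

theorem integral_inner_coulombField_nonneg (h : IsPhaseDensity D m g) {u : E3 → E3}
    (hu : Measurable u) (hle : ∀ x, ‖u x‖ ≤ 1 + ‖x‖) (hmono : ∀ x y, 0 ≤ ⟪x - y, u x - u y⟫_ℝ) :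
    0 ≤ ∫ p : E3 × E3, ⟪coulombField (spatialDensity g) p.1, u p.1⟫_ℝ * g p :=
  calc 0 ≤ ∫ x, spatialDensity g x * ⟪coulombField (spatialDensity g) x, u x⟫_ℝ :=
        h.isCoulombDensity.integral_inner_coulombField_nonneg hu hle hmono
    _ = ∫ p : E3 × E3, ⟪coulombField (spatialDensity g) p.1, u p.1⟫_ℝ * g p := by
        refine Eq.trans ?_ (integral_prod _ (h.integrable_inner_coulombField hu hle)).symm
        simp only [integral_const_mul, spatialDensity, mul_comm]

end IsPhaseDensity

/-! ### Integration by parts against a divergence-free field -/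

section Slices

variable {E F : Type*} [NormedAddCommGroup E] [NormedAddCommGroup F] {H : E × F → ℝ}

theorem hasCompactSupport_comp_prodMk_right (hs : HasCompactSupport H) (x : E) :
    HasCompactSupport fun v => H (x, v) :=
  .intro (hs.isCompact.image continuous_snd) fun v hv =>
    image_eq_zero_of_notMem_tsupport fun h => hv ⟨(x, v), h, rfl⟩

theorem hasCompactSupport_comp_prodMk_left (hs : HasCompactSupport H) (v : F) :
    HasCompactSupport fun x => H (x, v) :=
  .intro (hs.isCompact.image continuous_fst) fun x hx =>
    image_eq_zero_of_notMem_tsupport fun h => hx ⟨(x, v), h, rfl⟩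

variable [NormedSpace ℝ E] [NormedSpace ℝ F]

theorem fderiv_comp_prodMk_right (hH : Differentiable ℝ H) (x : E) (v b : F) :
    fderiv ℝ (fun v => H (x, v)) v b = fderiv ℝ H (x, v) (0, b) := by
  have hcomp := (hH (x, v)).hasFDerivAt.comp v (hasFDerivAt_prodMk_right (𝕜 := ℝ) x v)
  simpa [Function.comp_def] using congrArg (fun L : F →L[ℝ] ℝ => L b) hcomp.fderiv

theorem fderiv_comp_prodMk_left (hH : Differentiable ℝ H) (x a : E) (v : F) :
    fderiv ℝ (fun x => H (x, v)) x a = fderiv ℝ H (x, v) (a, 0) := by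
  have hcomp := HasFDerivAt.comp (f := fun x => (x, v)) x (hH (x, v)).hasFDerivAt
    (hasFDerivAt_prodMk_left (𝕜 := ℝ) x v)
  simpa [Function.comp_def] using congrArg (fun L : E →L[ℝ] ℝ => L a) hcomp.fderiv

end Slices

section IntegrationByParts

variable {E F : Type*} [NormedAddCommGroup E] [NormedSpace ℝ E] [FiniteDimensional ℝ E]
  [MeasurableSpace E] [BorelSpace E] [NormedAddCommGroup F] [NormedSpace ℝ F]
  [FiniteDimensional ℝ F] [MeasurableSpace F] [BorelSpace F]

theorem measurable_clm_apply {L : E → E →L[ℝ] ℝ} (hL : Continuous L) {w : E → E}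
    (hw : Measurable w) : Measurable fun p => L p (w p) :=
  (isBoundedBilinearMap_apply (𝕜 := ℝ) (E := E) (F := ℝ)).continuous.measurable.comp
    (hL.measurable.prodMk hw)

theorem integrable_clm_apply {μ : Measure E} [IsFiniteMeasureOnCompacts μ] {L : E → E →L[ℝ] ℝ}
    (hL : Continuous L) (hs : HasCompactSupport L) {w : E → E} (hw : Measurable w) {C : ℝ}
    (hC : ∀ p, ‖w p‖ ≤ C) : Integrable (fun p => L p (w p)) μ :=
  ((hL.norm.integrable_of_hasCompactSupport hs.norm).mul_const C).mono'
    (measurable_clm_apply hL hw).aestronglyMeasurable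
    (.of_forall fun p => (L p).le_opNorm_of_le (hC p))

theorem integrable_fderiv_apply {μ : Measure E} [IsFiniteMeasureOnCompacts μ] {H : E → ℝ}
    (hH : ContDiff ℝ 1 H) (hs : HasCompactSupport H) {w : E → E} (hw : Measurable w) {C : ℝ}
    (hC : ∀ p, ‖w p‖ ≤ C) : Integrable (fun p => fderiv ℝ H p (w p)) μ :=
  integrable_clm_apply (hH.continuous_fderiv one_ne_zero) (hs.fderiv (𝕜 := ℝ)) hw hC

theorem integral_fderiv_apply_const_eq_zero {μ : Measure E} [μ.IsAddHaarMeasure] {H : E → ℝ}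
    (hH : ContDiff ℝ 1 H) (hs : HasCompactSupport H) (v : E) : ∫ p, fderiv ℝ H p v ∂μ = 0 := by
  have hparts := integral_mul_fderiv_eq_neg_fderiv_mul_of_integrable (μ := μ) (v := v)
    (f := fun _ => (1 : ℝ)) (g := H) (by simp)
    (by simpa using integrable_fderiv_apply hH hs measurable_const fun _ => le_rfl)
    (by simpa using hH.continuous.integrable_of_hasCompactSupport hs)
    (fun _ _ => differentiableAt_const _) fun p _ => hH.differentiable one_ne_zero p
  simpa using hparts

variable {μ : Measure E} [μ.IsAddHaarMeasure] {ν : Measure F} [ν.IsAddHaarMeasure]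
  {a : F → E} {b : E → F} {A B : ℝ}

theorem integral_fderiv_apply_eq_zero {H : E × F → ℝ} (hH : ContDiff ℝ 1 H)
    (hs : HasCompactSupport H) (ha : Measurable a) (hA : ∀ v, ‖a v‖ ≤ A) (hb : Measurable b)
    (hB : ∀ x, ‖b x‖ ≤ B) : ∫ p, fderiv ℝ H p (a p.2, b p.1) ∂(μ.prod ν) = 0 := by
  have hd : Differentiable ℝ H := hH.differentiable one_ne_zero
  have hint₁ : Integrable (fun p : E × F => fderiv ℝ H p (a p.2, 0)) (μ.prod ν) :=
    integrable_fderiv_apply hH hs (w := fun p => (a p.2, 0)) (by fun_prop) (C := A)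
      fun p => by simpa using hA p.2
  have hint₂ : Integrable (fun p : E × F => fderiv ℝ H p (0, b p.1)) (μ.prod ν) :=
    integrable_fderiv_apply hH hs (w := fun p => (0, b p.1)) (by fun_prop) (C := B)
      fun p => by simpa using hB p.1
  have hzero₁ : ∫ p, fderiv ℝ H p (a p.2, 0) ∂(μ.prod ν) = 0 := by
    rw [integral_prod_symm _ hint₁]
    refine integral_eq_zero_of_ae (.of_forall fun v => ?_)
    simp only [← fderiv_comp_prodMk_left hd, Pi.zero_apply]
    exact integral_fderiv_apply_const_eq_zero (hH.comp (contDiff_prodMk_left v))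
      (hasCompactSupport_comp_prodMk_left hs v) _
  have hzero₂ : ∫ p, fderiv ℝ H p (0, b p.1) ∂(μ.prod ν) = 0 := by
    rw [integral_prod _ hint₂]
    refine integral_eq_zero_of_ae (.of_forall fun x => ?_)
    simp only [← fderiv_comp_prodMk_right hd, Pi.zero_apply]
    exact integral_fderiv_apply_const_eq_zero (hH.comp (contDiff_prodMk_right x))
      (hasCompactSupport_comp_prodMk_right hs x) _
  calc ∫ p, fderiv ℝ H p (a p.2, b p.1) ∂(μ.prod ν)
      = ∫ p, (fderiv ℝ H p (a p.2, 0) + fderiv ℝ H p (0, b p.1)) ∂(μ.prod ν) := by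
        simp only [← map_add, Prod.mk_add_mk, add_zero, zero_add]
    _ = 0 := by rw [integral_add hint₁ hint₂, hzero₁, hzero₂, add_zero]

theorem integral_fderiv_apply_mul_eq_neg {Ψ g : E × F → ℝ} (hΨ : ContDiff ℝ 1 Ψ)
    (hs : HasCompactSupport Ψ) (hg : ContDiff ℝ 1 g) (ha : Measurable a) (hA : ∀ v, ‖a v‖ ≤ A)
    (hb : Measurable b) (hB : ∀ x, ‖b x‖ ≤ B) :
    ∫ p, fderiv ℝ Ψ p (a p.2, b p.1) * g p ∂(μ.prod ν) =
      -∫ p, Ψ p * fderiv ℝ g p (a p.2, b p.1) ∂(μ.prod ν) := by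
  have hw : Measurable fun p : E × F => (a p.2, b p.1) := by fun_prop
  have hW (p : E × F) : ‖(a p.2, b p.1)‖ ≤ max A B := max_le_max (hA _) (hB _)
  have hint₁ : Integrable (fun p => fderiv ℝ Ψ p (a p.2, b p.1) * g p) (μ.prod ν) := by
    have hsupp : HasCompactSupport (g • fderiv ℝ Ψ) := (hs.fderiv (𝕜 := ℝ)).smul_left
    simpa only [Pi.smul_apply', smul_apply, smul_eq_mul, mul_comm] using
      integrable_clm_apply (hg.continuous.smul (hΨ.continuous_fderiv one_ne_zero)) hsupp hw hW
  have hint₂ : Integrable (fun p => Ψ p * fderiv ℝ g p (a p.2, b p.1)) (μ.prod ν) := by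
    have hsupp : HasCompactSupport (Ψ • fderiv ℝ g) := hs.smul_right
    simpa only [Pi.smul_apply', smul_apply, smul_eq_mul] using
      integrable_clm_apply (hΨ.continuous.smul (hg.continuous_fderiv one_ne_zero)) hsupp hw hW
  have hleibniz (p : E × F) : fderiv ℝ (Ψ * g) p (a p.2, b p.1) =
      fderiv ℝ Ψ p (a p.2, b p.1) * g p + Ψ p * fderiv ℝ g p (a p.2, b p.1) := by
    rw [fderiv_mul (hΨ.differentiable one_ne_zero p) (hg.differentiable one_ne_zero p)]
    simp only [add_apply, smul_apply, smul_eq_mul]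
    ring
  have hzero := integral_fderiv_apply_eq_zero (μ := μ) (ν := ν) (H := Ψ * g) (hΨ.mul hg)
    hs.mul_right ha hA hb hB
  simp only [hleibniz] at hzero
  rw [integral_add hint₁ hint₂] at hzero
  exact eq_neg_of_add_eq_zero_left hzero

end IntegrationByParts

/-! ### The weak form of the transport equation -/

theorem restrict_prod_eq_restrict_prod_univ {α β : Type*} [MeasurableSpace α] [MeasurableSpace β]
    {μ : Measure α} {ν : Measure β} [SFinite μ] [SFinite ν] (s : Set α) :
    (μ.restrict s).prod ν = (μ.prod ν).restrict (s ×ˢ univ) := by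
  rw [← Measure.prod_restrict, Measure.restrict_univ]

section TimeSlices

variable {G : Type*} [NormedAddCommGroup G] [NormedSpace ℝ G] {F : ℝ × G → ℝ} {I : Set ℝ}

theorem contDiff_slice (hF : ContDiffOn ℝ 1 F (I ×ˢ univ)) {t : ℝ} (ht : t ∈ I) :
    ContDiff ℝ 1 fun p => F (t, p) :=
  contDiffOn_univ.1
    (hF.comp (contDiff_prodMk_right t).contDiffOn fun _ _ => ⟨ht, mem_univ _⟩)

theorem fderiv_slice_apply (hF : ContDiffOn ℝ 1 F (I ×ˢ univ)) {t : ℝ} (ht : t ∈ I) (p w : G) :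
    fderiv ℝ (fun p => F (t, p)) p w = fderivWithin ℝ F (I ×ˢ univ) (t, p) (0, w) := by
  have hF' := (hF.differentiableOn one_ne_zero (t, p) ⟨ht, mem_univ _⟩).hasFDerivWithinAt
  have hcomp := hF'.comp p (hasFDerivAt_prodMk_right (𝕜 := ℝ) t p).hasFDerivWithinAt (s := univ)
    fun _ _ => ⟨ht, mem_univ _⟩
  simpa [Function.comp_def] using
    congrArg (fun L : G →L[ℝ] ℝ => L w) (hasFDerivWithinAt_univ.1 hcomp).fderiv

variable {a b : ℝ}

theorem continuousOn_timeDeriv (hab : a < b) (hF : ContDiffOn ℝ 1 F (Icc a b ×ˢ univ)) :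
    ContinuousOn (fun z => fderivWithin ℝ F (Icc a b ×ˢ univ) z (1, 0)) (Icc a b ×ˢ univ) :=
  (hF.continuousOn_fderivWithin ((uniqueDiffOn_Icc hab).prod uniqueDiffOn_univ)
    le_rfl).clm_apply continuousOn_const

theorem integral_timeDeriv (hab : a < b) (hF : ContDiffOn ℝ 1 F (Icc a b ×ˢ univ)) (p : G) :
    ∫ t in Icc a b, fderivWithin ℝ F (Icc a b ×ˢ univ) (t, p) (1, 0) = F (b, p) - F (a, p) := by
  have hmaps : MapsTo (fun t : ℝ => (t, p)) (Icc a b) (Icc a b ×ˢ univ) :=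
    fun _ ht => ⟨ht, mem_univ _⟩
  have hpath : ContinuousOn (fun t : ℝ => (t, p)) (Icc a b) := by fun_prop
  have hderiv (t : ℝ) (ht : t ∈ Ioo a b) :
      HasDerivAt (fun t => F (t, p)) (fderivWithin ℝ F (Icc a b ×ˢ univ) (t, p) (1, 0)) t := by
    have hnhds : Icc a b ×ˢ univ ∈ 𝓝 (t, p) :=
      prod_mem_nhds (Icc_mem_nhds ht.1 ht.2) Filter.univ_mem
    have hF' := (hF.differentiableOn one_ne_zero (t, p)
      (hmaps (Ioo_subset_Icc_self ht))).hasFDerivWithinAt.hasFDerivAt hnhds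
    exact hF'.comp_hasDerivAt t ((hasDerivAt_id t).prodMk (hasDerivAt_const t p))
  rw [integral_Icc_eq_integral_Ioc, ← intervalIntegral.integral_of_le hab.le]
  exact intervalIntegral.integral_eq_sub_of_hasDerivAt_of_le hab.le
    (hF.continuousOn.comp hpath hmaps) hderiv
    (((continuousOn_timeDeriv hab hF).comp hpath hmaps).intervalIntegrable_of_Icc hab.le)

variable [FiniteDimensional ℝ G] [MeasurableSpace G] [BorelSpace G] {μ : Measure G}
  [IsFiniteMeasureOnCompacts μ] {Ψ : G → ℝ}

theorem integrable_mul_of_hasCompactSupport (hΨ : Continuous Ψ) (hs : HasCompactSupport Ψ)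
    (hF : ContinuousOn F (Icc a b ×ˢ univ)) :
    Integrable (fun z : ℝ × G => Ψ z.2 * F z) ((volume.restrict (Icc a b)).prod μ) := by
  rw [restrict_prod_eq_restrict_prod_univ]
  have hcont : ContinuousOn (fun z : ℝ × G => Ψ z.2 * F z) (Icc a b ×ˢ univ) :=
    (hΨ.comp continuous_snd).continuousOn.mul hF
  refine IntegrableOn.of_forall_sdiff_eq_zero
    ((hcont.mono (prod_mono_right (subset_univ (tsupport Ψ)))).integrableOn_compact
      (isCompact_Icc.prod hs))
    (measurableSet_Icc.prod MeasurableSet.univ) fun z hz => ?_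
  rw [image_eq_zero_of_notMem_tsupport fun h => hz.2 ⟨hz.1.1, h⟩, zero_mul]

theorem integral_mul_timeDeriv (hab : a < b) (hF : ContDiffOn ℝ 1 F (Icc a b ×ˢ univ))
    (hΨ : Continuous Ψ) (hs : HasCompactSupport Ψ) :
    ∫ t in Icc a b, ∫ p, Ψ p * fderivWithin ℝ F (Icc a b ×ˢ univ) (t, p) (1, 0) ∂μ =
      (∫ p, Ψ p * F (b, p) ∂μ) - ∫ p, Ψ p * F (a, p) ∂μ := by
  have hslice (t : ℝ) (ht : t ∈ Icc a b) : Integrable (fun p => Ψ p * F (t, p)) μ :=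
    (hΨ.mul (contDiff_slice hF ht).continuous).integrable_of_hasCompactSupport hs.mul_right
  rw [integral_integral_swap (integrable_mul_of_hasCompactSupport hΨ hs
      (continuousOn_timeDeriv hab hF)),
    ← integral_sub (hslice b (right_mem_Icc.2 hab.le)) (hslice a (left_mem_Icc.2 hab.le))]
  simp only [integral_const_mul, integral_timeDeriv hab hF, mul_sub]

end TimeSlices

theorem continuous_vhat : Continuous vhat := by
  have hγ : Continuous fun v : E3 => √(1 + ‖v‖ ^ 2) := by fun_prop
  exact (hγ.inv₀ fun v => by positivity).smul continuous_id

theorem norm_vhat_le (v : E3) : ‖vhat v‖ ≤ 1 := by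
  rw [vhat, norm_smul, Real.norm_of_nonneg (by positivity), inv_mul_le_iff₀ (by positivity),
    mul_one]
  exact Real.le_sqrt_of_sq_le (by linarith)

/-- The phase-space velocity `(v̂, E(t, x))` along which `f t` is transported. -/
def phaseVelocity (f : ℝ → E3 → E3 → ℝ) (t : ℝ) (p : E3 × E3) : E3 × E3 :=
  (vhat p.2, rvpField f t p.1)

section PhaseVelocity

variable {f : ℝ → E3 → E3 → ℝ} {t D m : ℝ}

theorem IsPhaseDensity.measurable_rvpField (hd : IsPhaseDensity D m fun p => f t p.1 p.2) :
    Measurable (rvpField f t) :=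
  hd.isCoulombDensity.measurable_coulombField

theorem IsPhaseDensity.norm_rvpField_le (hd : IsPhaseDensity D m fun p => f t p.1 p.2) (x : E3) :
    ‖rvpField f t x‖ ≤ fieldBound D m :=
  hd.isCoulombDensity.norm_coulombField_le x

theorem IsPhaseDensity.measurable_phaseVelocity (hd : IsPhaseDensity D m fun p => f t p.1 p.2) :
    Measurable (phaseVelocity f t) :=
  (continuous_vhat.measurable.comp measurable_snd).prodMk
    (hd.measurable_rvpField.comp measurable_fst)

theorem IsPhaseDensity.norm_phaseVelocity_le (hd : IsPhaseDensity D m fun p => f t p.1 p.2)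
    (p : E3 × E3) : ‖phaseVelocity f t p‖ ≤ max 1 (fieldBound D m) :=
  max_le_max (norm_vhat_le _) (hd.norm_rvpField_le _)

end PhaseVelocity

namespace IsRVPSolution

variable {f : ℝ → E3 → E3 → ℝ} {T D m : ℝ} {Ψ : E3 × E3 → ℝ}

theorem timeDeriv_eq_neg {I : Set ℝ} (hf : IsRVPSolution I f) {t : ℝ} (ht : t ∈ I) (p : E3 × E3) :
    fderivWithin ℝ (fun z : ℝ × E3 × E3 => f z.1 z.2.1 z.2.2) (I ×ˢ univ) (t, p) (1, 0) =
      -fderiv ℝ (fun p : E3 × E3 => f t p.1 p.2) p (phaseVelocity f t p) := by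
  rw [fderiv_slice_apply hf.2.1 ht]
  refine eq_neg_of_add_eq_zero_left (Eq.trans ?_ (hf.2.2 t ht p.1 p.2))
  rw [← map_add, Prod.mk_add_mk, add_zero, zero_add]
  rfl

theorem integral_mul_timeDeriv (hf : IsRVPSolution (Icc 0 T) f)
    (hd : ∀ t ∈ Icc 0 T, IsPhaseDensity D m fun p => f t p.1 p.2) (hΨ : ContDiff ℝ 1 Ψ)
    (hs : HasCompactSupport Ψ) {t : ℝ} (ht : t ∈ Icc 0 T) :
    ∫ p, Ψ p * fderivWithin ℝ (fun z : ℝ × E3 × E3 => f z.1 z.2.1 z.2.2) (Icc 0 T ×ˢ univ)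
        (t, p) (1, 0) =
      ∫ p : E3 × E3, fderiv ℝ Ψ p (phaseVelocity f t p) * f t p.1 p.2 := by
  simp only [hf.timeDeriv_eq_neg ht, mul_neg, integral_neg]
  exact (integral_fderiv_apply_mul_eq_neg hΨ hs (contDiff_slice hf.2.1 ht)
    continuous_vhat.measurable norm_vhat_le (hd t ht).measurable_rvpField
    (hd t ht).norm_rvpField_le).symm

theorem integrableOn_of_hasCompactSupport (hT : 0 < T) (hf : IsRVPSolution (Icc 0 T) f)
    (hd : ∀ t ∈ Icc 0 T, IsPhaseDensity D m fun p => f t p.1 p.2) (hΨ : ContDiff ℝ 1 Ψ)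
    (hs : HasCompactSupport Ψ) :
    IntegrableOn (fun t => ∫ p : E3 × E3, fderiv ℝ Ψ p (phaseVelocity f t p) * f t p.1 p.2)
      (Icc 0 T) :=
  IntegrableOn.congr_fun (integrable_mul_of_hasCompactSupport hΨ.continuous hs
      (continuousOn_timeDeriv hT hf.2.1)).integral_prod_left
    (fun _ ht => hf.integral_mul_timeDeriv hd hΨ hs ht) measurableSet_Icc

theorem weakForm_of_hasCompactSupport (hT : 0 < T) (hf : IsRVPSolution (Icc 0 T) f)
    (hd : ∀ t ∈ Icc 0 T, IsPhaseDensity D m fun p => f t p.1 p.2) (hΨ : ContDiff ℝ 1 Ψ)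
    (hs : HasCompactSupport Ψ) :
    ∫ t in Icc 0 T, ∫ p : E3 × E3, fderiv ℝ Ψ p (phaseVelocity f t p) * f t p.1 p.2 =
      (∫ p : E3 × E3, Ψ p * f T p.1 p.2) - ∫ p : E3 × E3, Ψ p * f 0 p.1 p.2 := by
  rw [← setIntegral_congr_fun measurableSet_Icc fun t ht => hf.integral_mul_timeDeriv hd hΨ hs ht]
  exact _root_.integral_mul_timeDeriv hT hf.2.1 hΨ.continuous hs

end IsRVPSolution

section Cutoff

variable {G : Type*} [NormedAddCommGroup G] [NormedSpace ℝ G] {χ : ℕ → G → ℝ} {C : ℝ}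

/-- `C¹` cutoffs that exhaust a normed space, with gradients bounded by `C`. -/
structure IsCutoffSequence (C : ℝ) (χ : ℕ → G → ℝ) : Prop where
  contDiff : ∀ n, ContDiff ℝ 1 (χ n)
  hasCompactSupport : ∀ n, HasCompactSupport (χ n)
  abs_le_one : ∀ n p, |χ n p| ≤ 1
  norm_fderiv_le : ∀ n p, ‖fderiv ℝ (χ n) p‖ ≤ C
  eventuallyEq_one : ∀ p, ∀ᶠ n in atTop, χ n =ᶠ[𝓝 p] 1

theorem exists_isCutoffSequence [FiniteDimensional ℝ G] :
    ∃ (C : ℝ) (χ : ℕ → G → ℝ), IsCutoffSequence C χ := by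
  let b : ContDiffBump (0 : G) := ⟨1, 2, one_pos, one_lt_two⟩
  have hb : ContDiff ℝ 1 b := b.contDiff
  obtain ⟨C, hC⟩ := (b.hasCompactSupport.fderiv ℝ).exists_bound_of_continuous
    (hb.continuous_fderiv one_ne_zero)
  have hpos (n : ℕ) : (0 : ℝ) < n + 1 := by positivity
  refine ⟨C, fun n p => b (((n : ℝ) + 1)⁻¹ • p), fun n => hb.comp (contDiff_id.const_smul _),
    fun n => b.hasCompactSupport.comp_smul (inv_ne_zero (hpos n).ne'),
    fun n p => (abs_of_nonneg b.nonneg).trans_le b.le_one, fun n p => ?_, fun p => ?_⟩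
  · rw [fderiv_comp_smul, norm_smul, norm_inv, Real.norm_of_nonneg (hpos n).le]
    exact (mul_le_of_le_one_left (norm_nonneg _)
      (inv_le_one_of_one_le₀ (by linarith [n.cast_nonneg (α := ℝ)]))).trans (hC _)
  · filter_upwards [eventually_ge_atTop ⌈‖p‖⌉₊] with n hn
    have hp : ‖p‖ < n + 1 := (Nat.ceil_le.1 hn).trans_lt (lt_add_one _)
    filter_upwards [continuous_norm.continuousAt.eventually_lt_const hp] with q hq
    refine b.one_of_mem_closedBall ?_
    rw [mem_closedBall_zero_iff, norm_smul, norm_inv, Real.norm_of_nonneg (hpos n).le,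
      inv_mul_le_iff₀ (hpos n), mul_one]
    exact hq.le

namespace IsCutoffSequence

variable {Ψ : G → ℝ}

theorem eventuallyEq_mul (h : IsCutoffSequence C χ) (Ψ : G → ℝ) (p : G) :
    ∀ᶠ n in atTop, χ n * Ψ =ᶠ[𝓝 p] Ψ := by
  filter_upwards [h.eventuallyEq_one p] with n hn
  simpa only [one_mul] using hn.mul (EventuallyEq.refl (𝓝 p) Ψ)

theorem tendsto_mul (h : IsCutoffSequence C χ) (Ψ : G → ℝ) (p : G) :
    Tendsto (fun n => (χ n * Ψ) p) atTop (𝓝 (Ψ p)) :=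
  tendsto_const_nhds.congr' ((h.eventuallyEq_mul Ψ p).mono fun _ hn => hn.eq_of_nhds.symm)

theorem tendsto_fderiv_mul (h : IsCutoffSequence C χ) (Ψ : G → ℝ) (p w : G) :
    Tendsto (fun n => fderiv ℝ (χ n * Ψ) p w) atTop (𝓝 (fderiv ℝ Ψ p w)) :=
  tendsto_const_nhds.congr' ((h.eventuallyEq_mul Ψ p).mono fun _ hn => by simp only [hn.fderiv_eq])

theorem abs_mul_le (h : IsCutoffSequence C χ) (n : ℕ) (p : G) : |(χ n * Ψ) p| ≤ |Ψ p| := by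
  rw [Pi.mul_apply, abs_mul]
  exact mul_le_of_le_one_left (abs_nonneg _) (h.abs_le_one n p)

theorem norm_fderiv_mul_le (h : IsCutoffSequence C χ) (hΨ : Differentiable ℝ Ψ) (n : ℕ) (p : G) :
    ‖fderiv ℝ (χ n * Ψ) p‖ ≤ ‖fderiv ℝ Ψ p‖ + C * |Ψ p| := by
  rw [fderiv_mul ((h.contDiff n).differentiable one_ne_zero p) (hΨ p)]
  refine (norm_add_le _ _).trans ?_
  rw [norm_smul, norm_smul, mul_comm ‖Ψ p‖]
  exact add_le_add (mul_le_of_le_one_left (norm_nonneg _) (h.abs_le_one n p))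
    (mul_le_mul_of_nonneg_right (h.norm_fderiv_le n p) (norm_nonneg _))

end IsCutoffSequence

end Cutoff

/-- Test functions that may be paired with phase-space densities: `C¹` functions growing, together
with their gradients, no faster than the moment controlled by `IsPhaseDensity`. -/
structure IsTestFunction (c : ℝ) (Ψ : E3 × E3 → ℝ) : Prop where
  contDiff : ContDiff ℝ 1 Ψ
  abs_le : ∀ p, |Ψ p| ≤ c * phaseWeight p ^ 16
  norm_fderiv_le : ∀ p, ‖fderiv ℝ Ψ p‖ ≤ c * phaseWeight p ^ 16

theorem IsTestFunction.nonneg {c : ℝ} {Ψ : E3 × E3 → ℝ} (hΨ : IsTestFunction c Ψ) : 0 ≤ c :=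
  nonneg_of_mul_nonneg_left ((abs_nonneg _).trans (hΨ.abs_le 0))
    (pow_pos (one_pos.trans_le (one_le_phaseWeight 0)) 16)

theorem IsCutoffSequence.isTestFunction_mul {C c : ℝ} {χ : ℕ → E3 × E3 → ℝ} {Ψ : E3 × E3 → ℝ}
    (h : IsCutoffSequence C χ) (hΨ : IsTestFunction c Ψ) (n : ℕ) :
    IsTestFunction (c + C * c) (χ n * Ψ) where
  contDiff := (h.contDiff n).mul hΨ.contDiff
  abs_le p := by
    have hC : 0 ≤ C := (norm_nonneg _).trans (h.norm_fderiv_le 0 0)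
    have := mul_nonneg hC ((abs_nonneg _).trans (hΨ.abs_le p))
    linarith [h.abs_mul_le (Ψ := Ψ) n p, hΨ.abs_le p]
  norm_fderiv_le p := by
    have hC : 0 ≤ C := (norm_nonneg _).trans (h.norm_fderiv_le 0 0)
    have := mul_le_mul_of_nonneg_left (hΨ.abs_le p) hC
    linarith [h.norm_fderiv_mul_le (hΨ.contDiff.differentiable one_ne_zero) n p,
      hΨ.norm_fderiv_le p]

section WeakForm

variable {f : ℝ → E3 → E3 → ℝ} {T D m c t : ℝ} {Ψ : E3 × E3 → ℝ}

theorem IsPhaseDensity.abs_fderiv_phaseVelocity_le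
    (hd : IsPhaseDensity D m fun p => f t p.1 p.2) (hΨ : IsTestFunction c Ψ) (p : E3 × E3) :
    |fderiv ℝ Ψ p (phaseVelocity f t p)| ≤
      c * max 1 (fieldBound D m) * phaseWeight p ^ 16 := by
  rw [mul_right_comm]
  exact (ContinuousLinearMap.le_opNorm _ _).trans
    (mul_le_mul (hΨ.norm_fderiv_le p) (hd.norm_phaseVelocity_le p) (norm_nonneg _)
      ((norm_nonneg _).trans (hΨ.norm_fderiv_le p)))

theorem IsPhaseDensity.measurable_fderiv_phaseVelocity
    (hd : IsPhaseDensity D m fun p => f t p.1 p.2) (hΨ : ContDiff ℝ 1 Ψ) :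
    Measurable fun p => fderiv ℝ Ψ p (phaseVelocity f t p) :=
  measurable_clm_apply (hΨ.continuous_fderiv one_ne_zero) hd.measurable_phaseVelocity

theorem IsPhaseDensity.abs_integral_fderiv_phaseVelocity_le
    (hd : IsPhaseDensity D m fun p => f t p.1 p.2) (hΨ : IsTestFunction c Ψ) :
    |∫ p : E3 × E3, fderiv ℝ Ψ p (phaseVelocity f t p) * f t p.1 p.2| ≤
      c * max 1 (fieldBound D m) * m :=
  hd.abs_integral_mul_le (mul_nonneg hΨ.nonneg (one_pos.le.trans (le_max_left _ _)))
    (hd.abs_fderiv_phaseVelocity_le hΨ)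

namespace IsRVPSolution

theorem integrableOn_and_weakForm (hT : 0 < T) (hf : IsRVPSolution (Icc 0 T) f)
    (hd : ∀ t ∈ Icc 0 T, IsPhaseDensity D m fun p => f t p.1 p.2) (hΨ : IsTestFunction c Ψ) :
    IntegrableOn (fun t => ∫ p : E3 × E3, fderiv ℝ Ψ p (phaseVelocity f t p) * f t p.1 p.2)
        (Icc 0 T) ∧
      ∫ t in Icc 0 T, ∫ p : E3 × E3, fderiv ℝ Ψ p (phaseVelocity f t p) * f t p.1 p.2 =
        (∫ p : E3 × E3, Ψ p * f T p.1 p.2) - ∫ p : E3 × E3, Ψ p * f 0 p.1 p.2 := by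
  obtain ⟨C, χ, hχ⟩ := exists_isCutoffSequence (G := E3 × E3)
  have htest := hχ.isTestFunction_mul hΨ
  have hsupp (n : ℕ) : HasCompactSupport (χ n * Ψ) := (hχ.hasCompactSupport n).mul_right
  have hmeas (n : ℕ) := (hf.integrableOn_of_hasCompactSupport hT hd (htest n).contDiff
    (hsupp n)).aestronglyMeasurable
  have hinner : ∀ᵐ t ∂volume.restrict (Icc 0 T), Tendsto
      (fun n => ∫ p : E3 × E3, fderiv ℝ (χ n * Ψ) p (phaseVelocity f t p) * f t p.1 p.2) atTop
      (𝓝 (∫ p : E3 × E3, fderiv ℝ Ψ p (phaseVelocity f t p) * f t p.1 p.2)) :=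
    ae_restrict_of_forall_mem measurableSet_Icc fun t ht => (hd t ht).tendsto_integral_mul
      (fun n => (hd t ht).measurable_fderiv_phaseVelocity (htest n).contDiff)
      (fun n => (hd t ht).abs_fderiv_phaseVelocity_le (htest n))
      fun p => hχ.tendsto_fderiv_mul Ψ p _
  have hends (t : ℝ) (ht : t ∈ Icc 0 T) : Tendsto
      (fun n => ∫ p : E3 × E3, (χ n * Ψ) p * f t p.1 p.2) atTop
      (𝓝 (∫ p : E3 × E3, Ψ p * f t p.1 p.2)) :=
    (hd t ht).tendsto_integral_mul (fun n => (htest n).contDiff.continuous.measurable)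
      (fun n => (htest n).abs_le) (hχ.tendsto_mul Ψ)
  refine ⟨Integrable.of_bound (aestronglyMeasurable_of_tendsto_ae _ hmeas hinner) _
    (ae_restrict_of_forall_mem measurableSet_Icc fun t ht =>
      (hd t ht).abs_integral_fderiv_phaseVelocity_le hΨ), ?_⟩
  refine tendsto_nhds_unique (tendsto_integral_of_dominated_convergence _ hmeas
    (integrable_const _) (fun n => ae_restrict_of_forall_mem measurableSet_Icc fun t ht =>
      (hd t ht).abs_integral_fderiv_phaseVelocity_le (htest n)) hinner) ?_
  simpa only [hf.weakForm_of_hasCompactSupport hT hd (htest _).contDiff (hsupp _)] using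
    (hends T (right_mem_Icc.2 hT.le)).sub (hends 0 (left_mem_Icc.2 hT.le))

end IsRVPSolution

end WeakForm

/-! ### The virial multiplier -/

theorem sq_add_sq_rpow_le {δ η : ℝ} (hδ : δ ≤ 1) (hη : 0 < η) (r : ℝ) :
    (η ^ 2 + r ^ 2) ^ ((δ - 1) / 2) ≤ η ^ (δ - 1) :=
  calc (η ^ 2 + r ^ 2) ^ ((δ - 1) / 2) ≤ (η ^ 2) ^ ((δ - 1) / 2) :=
        Real.rpow_le_rpow_of_nonpos (by positivity) (by linarith [sq_nonneg r]) (by linarith)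
    _ = η ^ (δ - 1) := by
        rw [← Real.rpow_natCast_mul hη.le]
        congr 1
        push_cast
        ring

theorem rpow_le_one_add_pow {r b : ℝ} {n : ℕ} (hr : 0 ≤ r) (hb : 0 ≤ b) (hbn : b ≤ n) :
    r ^ b ≤ 1 + r ^ n := by
  rcases le_total r 1 with h | h
  · exact (Real.rpow_le_one hr h hb).trans (le_add_of_nonneg_right (pow_nonneg hr n))
  · rw [← Real.rpow_natCast]
    exact (Real.rpow_le_rpow_of_exponent_le h hbn).trans (le_add_of_nonneg_left zero_le_one)

section RadialField

variable {V : Type*} [NormedAddCommGroup V] [InnerProductSpace ℝ V] {δ η : ℝ}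

/-- The regularization `y / (η² + |y|²)^((1-δ)/2)` of the radial field `y / |y|^(1-δ)`. -/
def radialField (δ η : ℝ) (y : V) : V := (η ^ 2 + ‖y‖ ^ 2) ^ ((δ - 1) / 2) • y

theorem norm_radialField_le (hδ : δ ≤ 1) (y : V) : ‖radialField δ η y‖ ≤ ‖y‖ ^ δ := by
  rcases eq_or_ne y 0 with rfl | hy
  · simpa [radialField] using Real.zero_rpow_nonneg δ
  have hpos : 0 < ‖y‖ := norm_pos_iff.2 hy
  rw [radialField, norm_smul, Real.norm_of_nonneg (by positivity)]
  calc (η ^ 2 + ‖y‖ ^ 2) ^ ((δ - 1) / 2) * ‖y‖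
      ≤ (‖y‖ ^ 2) ^ ((δ - 1) / 2) * ‖y‖ := by
        gcongr ?_ * _
        exact Real.rpow_le_rpow_of_nonpos (by positivity) (by linarith [sq_nonneg η])
          (by linarith)
    _ = ‖y‖ ^ δ := by
        rw [← Real.rpow_natCast_mul hpos.le, ← Real.rpow_add_one hpos.ne']
        congr 1
        push_cast
        ring

theorem contDiff_radialField (δ : ℝ) (hη : 0 < η) :
    ContDiff ℝ 1 (radialField δ η : V → V) :=
  (ContDiff.rpow_const_of_ne (contDiff_const.add (contDiff_norm_sq ℝ))
    fun y => by positivity).smul contDiff_id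

theorem fderiv_radialField_apply (δ : ℝ) (hη : 0 < η) (y a : V) :
    fderiv ℝ (radialField δ η) y a = (η ^ 2 + ‖y‖ ^ 2) ^ ((δ - 1) / 2) • a -
      ((1 - δ) * (η ^ 2 + ‖y‖ ^ 2) ^ ((δ - 1) / 2 - 1) * ⟪y, a⟫_ℝ) • y := by
  have hr := ((hasFDerivAt_id y).norm_sq.const_add (η ^ 2)).rpow_const (p := (δ - 1) / 2)
    (.inl (by positivity))
  rw [show radialField δ η = fun y : V => (η ^ 2 + ‖id y‖ ^ 2) ^ ((δ - 1) / 2) • id y from rfl,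
    (hr.fun_smul (hasFDerivAt_id y)).fderiv]
  simp only [id_eq, ContinuousLinearMap.comp_id, add_apply, smul_apply,
    ContinuousLinearMap.id_apply, ContinuousLinearMap.smulRight_apply, coe_innerSL_apply,
    nsmul_eq_mul, Nat.cast_ofNat, smul_eq_mul]
  module

theorem inner_sq_le_sq_add_norm_sq_mul (η : ℝ) (y a : V) :
    ⟪y, a⟫_ℝ ^ 2 ≤ (η ^ 2 + ‖y‖ ^ 2) * ‖a‖ ^ 2 := by
  have h := sq_le_sq.2 (by simpa [abs_mul] using abs_real_inner_le_norm y a :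
    |⟪y, a⟫_ℝ| ≤ |‖y‖ * ‖a‖|)
  nlinarith [sq_nonneg (η * ‖a‖)]

theorem le_inner_fderiv_radialField (hδ : δ ≤ 1) (hη : 0 < η) (y a : V) :
    δ * (η ^ 2 + ‖y‖ ^ 2) ^ ((δ - 1) / 2) * ‖a‖ ^ 2 ≤ ⟪fderiv ℝ (radialField δ η) y a, a⟫_ℝ := by
  have hr : 0 < η ^ 2 + ‖y‖ ^ 2 := by positivity
  rw [fderiv_radialField_apply δ hη, inner_sub_left, real_inner_smul_left, real_inner_smul_left,
    real_inner_self_eq_norm_sq]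
  have hcs := mul_le_mul_of_nonneg_left (inner_sq_le_sq_add_norm_sq_mul η y a)
    (mul_nonneg (sub_nonneg.2 hδ) (Real.rpow_nonneg hr.le ((δ - 1) / 2 - 1)))
  have hsplit := Real.rpow_sub_one hr.ne' ((δ - 1) / 2)
  rw [eq_div_iff hr.ne'] at hsplit
  rw [← hsplit]
  linarith

theorem norm_fderiv_radialField_le (h0 : 0 ≤ δ) (hδ : δ ≤ 1) (hη : 0 < η) (y : V) :
    ‖fderiv ℝ (radialField δ η) y‖ ≤ 2 * η ^ (δ - 1) := by
  refine ContinuousLinearMap.opNorm_le_bound _ (by positivity) fun a => ?_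
  have hr : 0 < η ^ 2 + ‖y‖ ^ 2 := by positivity
  have hterm : ‖((1 - δ) * (η ^ 2 + ‖y‖ ^ 2) ^ ((δ - 1) / 2 - 1) * ⟪y, a⟫_ℝ) • y‖ ≤
      (η ^ 2 + ‖y‖ ^ 2) ^ ((δ - 1) / 2) * ‖a‖ := by
    rw [norm_smul, norm_mul, norm_mul, Real.norm_of_nonneg (sub_nonneg.2 hδ),
      Real.norm_of_nonneg (Real.rpow_nonneg hr.le _)]
    calc (1 - δ) * (η ^ 2 + ‖y‖ ^ 2) ^ ((δ - 1) / 2 - 1) * ‖⟪y, a⟫_ℝ‖ * ‖y‖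
        ≤ 1 * (η ^ 2 + ‖y‖ ^ 2) ^ ((δ - 1) / 2 - 1) * (‖y‖ * ‖a‖) * ‖y‖ := by
          gcongr
          · linarith
          · exact norm_inner_le_norm y a
      _ = (η ^ 2 + ‖y‖ ^ 2) ^ ((δ - 1) / 2 - 1) * ‖y‖ ^ 2 * ‖a‖ := by ring
      _ ≤ (η ^ 2 + ‖y‖ ^ 2) ^ ((δ - 1) / 2 - 1) * (η ^ 2 + ‖y‖ ^ 2) * ‖a‖ := by
          gcongr
          linarith [sq_nonneg η]
      _ = (η ^ 2 + ‖y‖ ^ 2) ^ ((δ - 1) / 2) * ‖a‖ := by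
          rw [← Real.rpow_add_one hr.ne', sub_add_cancel]
  calc ‖fderiv ℝ (radialField δ η) y a‖
      ≤ (η ^ 2 + ‖y‖ ^ 2) ^ ((δ - 1) / 2) * ‖a‖ +
        (η ^ 2 + ‖y‖ ^ 2) ^ ((δ - 1) / 2) * ‖a‖ := by
        rw [fderiv_radialField_apply δ hη]
        refine (norm_sub_le _ _).trans (add_le_add ?_ hterm)
        rw [norm_smul, Real.norm_of_nonneg (Real.rpow_nonneg hr.le _)]
    _ = 2 * (η ^ 2 + ‖y‖ ^ 2) ^ ((δ - 1) / 2) * ‖a‖ := by ring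
    _ ≤ 2 * η ^ (δ - 1) * ‖a‖ := by
        gcongr
        exact sq_add_sq_rpow_le hδ hη _

theorem radialField_monotone (h0 : 0 ≤ δ) (hδ : δ ≤ 1) (hη : 0 < η) (x y : V) :
    0 ≤ ⟪x - y, radialField δ η x - radialField δ η y⟫_ℝ := by
  have hderiv (s : ℝ) : HasDerivAt (fun s : ℝ => ⟪radialField δ η (y + s • (x - y)), x - y⟫_ℝ)
      ⟪fderiv ℝ (radialField δ η) (y + s • (x - y)) (x - y), x - y⟫_ℝ s := by
    have hline : HasDerivAt (fun s : ℝ => y + s • (x - y)) (x - y) s := by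
      simpa using ((hasDerivAt_id s).smul_const (x - y)).const_add y
    have hF := ((contDiff_radialField δ hη).differentiable one_ne_zero
      (y + s • (x - y))).hasFDerivAt.comp_hasDerivAt s hline
    simpa using hF.inner ℝ (hasDerivAt_const s (x - y))
  have hmono := monotone_of_deriv_nonneg (fun s => (hderiv s).differentiableAt) fun s => by
    rw [(hderiv s).deriv]
    exact le_trans (by positivity) (le_inner_fderiv_radialField hδ hη _ _)
  simpa [inner_sub_right, real_inner_comm] using hmono zero_le_one

end RadialField

section Virial

variable {V : Type*} [NormedAddCommGroup V] [InnerProductSpace ℝ V] {A : E3 →L[ℝ] V} {δ η : ℝ}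

/-- The virial multiplier `⟪Ax, Av⟫ / |Ax|^(1-δ)`, regularized at scale `η`. -/
def virial (A : E3 →L[ℝ] V) (δ η : ℝ) (p : E3 × E3) : ℝ :=
  ⟪radialField δ η (A p.1), A p.2⟫_ℝ

/-- The weight `|Av|² / (|Ax|^(1-δ) √(1+|v|²))`, regularized at scale `η`; at `η = 0` it takes the
value `0` where `Ax = 0`. -/
def virialWeight (A : E3 →L[ℝ] V) (δ η : ℝ) (p : E3 × E3) : ℝ :=
  ‖A p.2‖ ^ 2 * (η ^ 2 + ‖A p.1‖ ^ 2) ^ ((δ - 1) / 2) / √(1 + ‖p.2‖ ^ 2)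

theorem virialWeight_nonneg (A : E3 →L[ℝ] V) (δ η : ℝ) (p : E3 × E3) :
    0 ≤ virialWeight A δ η p := by
  unfold virialWeight
  positivity

theorem measurable_virialWeight (A : E3 →L[ℝ] V) (δ η : ℝ) :
    Measurable (virialWeight A δ η) := by
  have hx : Measurable fun p : E3 × E3 => ‖A p.1‖ :=
    (A.continuous.comp continuous_fst).norm.measurable
  have hv : Measurable fun p : E3 × E3 => ‖A p.2‖ :=
    (A.continuous.comp continuous_snd).norm.measurable
  unfold virialWeight
  fun_prop

theorem tendsto_virialWeight {p : E3 × E3} (hp : A p.1 ≠ 0) :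
    Tendsto (fun η => virialWeight A δ η p) (𝓝 0) (𝓝 (virialWeight A δ 0 p)) := by
  have hcont : Continuous fun η : ℝ => η ^ 2 + ‖A p.1‖ ^ 2 := by fun_prop
  have hne : (0 : ℝ) ^ 2 + ‖A p.1‖ ^ 2 ≠ 0 := by positivity
  exact ((hcont.continuousAt.rpow_const (.inl hne)).const_mul _).div_const _

theorem virialWeight_zero_of_apply_eq_zero (hδ : δ ≠ 1) {p : E3 × E3} (hp : A p.1 = 0) :
    virialWeight A δ 0 p = 0 := by
  have hexp : (δ - 1) / 2 ≠ 0 := div_ne_zero (sub_ne_zero.2 hδ) two_ne_zero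
  simp [virialWeight, hp, Real.zero_rpow hexp]

theorem norm_apply_le (hA : ‖A‖ ≤ 1) (x : E3) : ‖A x‖ ≤ ‖x‖ :=
  (A.le_of_opNorm_le hA x).trans_eq (one_mul _)

theorem virialWeight_le (hA : ‖A‖ ≤ 1) (hδ : δ ≤ 1) (hη : 0 < η) (p : E3 × E3) :
    virialWeight A δ η p ≤ η ^ (δ - 1) * phaseWeight p ^ 16 := by
  have hQ := one_le_phaseWeight p
  have hv : ‖A p.2‖ ≤ phaseWeight p := by
    linarith [norm_apply_le hA p.2, one_add_norm_snd_le_phaseWeight p]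
  calc virialWeight A δ η p ≤ ‖A p.2‖ ^ 2 * (η ^ 2 + ‖A p.1‖ ^ 2) ^ ((δ - 1) / 2) :=
        div_le_self (by positivity) (Real.one_le_sqrt.2 (by linarith [sq_nonneg ‖p.2‖]))
    _ ≤ phaseWeight p ^ 2 * η ^ (δ - 1) := by
        gcongr
        exact sq_add_sq_rpow_le hδ hη _
    _ ≤ η ^ (δ - 1) * phaseWeight p ^ 16 := by
        rw [mul_comm]
        gcongr
        norm_num

theorem contDiff_virial (A : E3 →L[ℝ] V) (δ : ℝ) (hη : 0 < η) : ContDiff ℝ 1 (virial A δ η) :=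
  ((contDiff_radialField δ hη).comp (A.contDiff.comp contDiff_fst)).inner ℝ
    (A.contDiff.comp contDiff_snd)

theorem fderiv_virial_apply (A : E3 →L[ℝ] V) (δ : ℝ) (hη : 0 < η) (p w : E3 × E3) :
    fderiv ℝ (virial A δ η) p w =
      ⟪fderiv ℝ (radialField δ η) (A p.1) (A w.1), A p.2⟫_ℝ +
        ⟪radialField δ η (A p.1), A w.2⟫_ℝ := by
  have hF := (((contDiff_radialField δ hη).differentiable one_ne_zero (A p.1)).hasFDerivAt.comp
    p.1 A.hasFDerivAt).comp p hasFDerivAt_fst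
  have hA := A.hasFDerivAt.comp p (hasFDerivAt_snd (𝕜 := ℝ))
  have hvirial : HasFDerivAt (virial A δ η) _ p := hF.inner ℝ hA
  rw [hvirial.fderiv]
  simp [fderivInnerCLM_apply, add_comm]

theorem norm_radialField_comp_le (hA : ‖A‖ ≤ 1) (h0 : 0 ≤ δ) (hδ : δ ≤ 1) (x : E3) :
    ‖radialField δ η (A x)‖ ≤ ‖x‖ ^ δ :=
  (norm_radialField_le hδ _).trans
    (Real.rpow_le_rpow (norm_nonneg _) (norm_apply_le hA x) h0)

theorem abs_virial_le (hA : ‖A‖ ≤ 1) (h0 : 0 ≤ δ) (hδ : δ ≤ 1) (p : E3 × E3) :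
    |virial A δ η p| ≤ ‖p.1‖ ^ δ * ‖p.2‖ :=
  (abs_real_inner_le_norm _ _).trans (mul_le_mul (norm_radialField_comp_le hA h0 hδ _)
    (norm_apply_le hA _) (norm_nonneg _) (by positivity))

theorem rpow_le_phaseWeight (h0 : 0 ≤ δ) (hδ : δ ≤ 1) (p : E3 × E3) :
    ‖p.1‖ ^ δ ≤ phaseWeight p := by
  have h := rpow_le_one_add_pow (n := 1) (norm_nonneg p.1) h0 (by simpa using hδ)
  rw [pow_one] at h
  exact h.trans (one_add_norm_fst_le_phaseWeight p)

theorem rpow_norm_mul_norm_le_phaseWeight_pow (h0 : 0 ≤ δ) (hδ : δ ≤ 1) (p : E3 × E3) :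
    ‖p.1‖ ^ δ * ‖p.2‖ ≤ phaseWeight p ^ 16 := by
  have hQ := one_le_phaseWeight p
  calc ‖p.1‖ ^ δ * ‖p.2‖ ≤ phaseWeight p * phaseWeight p := by
        gcongr
        · exact rpow_le_phaseWeight h0 hδ p
        · linarith [one_add_norm_snd_le_phaseWeight p]
    _ = phaseWeight p ^ 2 := (sq _).symm
    _ ≤ phaseWeight p ^ 16 := by
        gcongr
        norm_num

theorem norm_fderiv_virial_le (hA : ‖A‖ ≤ 1) (h0 : 0 ≤ δ) (hδ : δ ≤ 1) (hη : 0 < η)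
    (p : E3 × E3) :
    ‖fderiv ℝ (virial A δ η) p‖ ≤ (2 * η ^ (δ - 1) + 1) * phaseWeight p := by
  have hQ := one_le_phaseWeight p
  have hv : ‖A p.2‖ ≤ phaseWeight p := by
    linarith [norm_apply_le hA p.2, one_add_norm_snd_le_phaseWeight p]
  have hF : ‖radialField δ η (A p.1)‖ ≤ phaseWeight p :=
    (norm_radialField_comp_le hA h0 hδ _).trans (rpow_le_phaseWeight h0 hδ p)
  refine ContinuousLinearMap.opNorm_le_bound _ (by positivity) fun w => ?_
  rw [fderiv_virial_apply A δ hη]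
  calc ‖⟪fderiv ℝ (radialField δ η) (A p.1) (A w.1), A p.2⟫_ℝ +
        ⟪radialField δ η (A p.1), A w.2⟫_ℝ‖
      ≤ 2 * η ^ (δ - 1) * ‖A w.1‖ * ‖A p.2‖ + ‖radialField δ η (A p.1)‖ * ‖A w.2‖ := by
        refine (norm_add_le _ _).trans (add_le_add ((norm_inner_le_norm _ _).trans ?_)
          (norm_inner_le_norm _ _))
        gcongr
        exact ContinuousLinearMap.le_of_opNorm_le _ (norm_fderiv_radialField_le h0 hδ hη _) _
    _ ≤ 2 * η ^ (δ - 1) * ‖w‖ * phaseWeight p + phaseWeight p * ‖w‖ := by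
        gcongr
        · exact (norm_apply_le hA _).trans (norm_fst_le w)
        · exact (norm_apply_le hA _).trans (norm_snd_le w)
    _ = (2 * η ^ (δ - 1) + 1) * phaseWeight p * ‖w‖ := by ring

theorem isTestFunction_virial (hA : ‖A‖ ≤ 1) (h0 : 0 ≤ δ) (hδ : δ ≤ 1) (hη : 0 < η) :
    IsTestFunction (2 * η ^ (δ - 1) + 1) (virial A δ η) where
  contDiff := contDiff_virial A δ hη
  abs_le p := by
    refine ((abs_virial_le hA h0 hδ p).trans (rpow_norm_mul_norm_le_phaseWeight_pow h0 hδ p)).trans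
      (le_mul_of_one_le_left ?_ (by linarith [Real.rpow_pos_of_pos hη (δ - 1)]))
    exact pow_nonneg (zero_le_one.trans (one_le_phaseWeight p)) _
  norm_fderiv_le p := by
    refine (norm_fderiv_virial_le hA h0 hδ hη p).trans ?_
    gcongr
    exact le_self_pow₀ (one_le_phaseWeight p) (by norm_num)

variable [CompleteSpace V]

/-- The vector field along which the force does work in the derivative of `virial A δ η`. -/
def virialField (A : E3 →L[ℝ] V) (δ η : ℝ) (x : E3) : E3 := A.adjoint (radialField δ η (A x))

theorem measurable_virialField (A : E3 →L[ℝ] V) (δ : ℝ) (hη : 0 < η) :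
    Measurable (virialField A δ η) :=
  (A.adjoint.continuous.comp
    ((contDiff_radialField δ hη).continuous.comp A.continuous)).measurable

theorem virialField_monotone (h0 : 0 ≤ δ) (hδ : δ ≤ 1) (hη : 0 < η) (x y : E3) :
    0 ≤ ⟪x - y, virialField A δ η x - virialField A δ η y⟫_ℝ := by
  rw [virialField, virialField, ← map_sub, ContinuousLinearMap.adjoint_inner_right, map_sub]
  exact radialField_monotone h0 hδ hη _ _

theorem norm_virialField_le (hA : ‖A‖ ≤ 1) (h0 : 0 ≤ δ) (hδ : δ ≤ 1) (x : E3) :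
    ‖virialField A δ η x‖ ≤ 1 + ‖x‖ := by
  have hadj : ‖A.adjoint‖ ≤ 1 := (LinearIsometryEquiv.norm_map _ A).trans_le hA
  calc ‖virialField A δ η x‖ ≤ 1 * ‖radialField δ η (A x)‖ :=
        ContinuousLinearMap.le_of_opNorm_le _ hadj _
    _ ≤ ‖x‖ ^ δ := by
        rw [one_mul]
        exact norm_radialField_comp_le hA h0 hδ x
    _ ≤ 1 + ‖x‖ := by
        simpa using rpow_le_one_add_pow (n := 1) (norm_nonneg x) h0 (by simpa using hδ)

theorem virialWeight_add_inner_le_fderiv (hδ : δ ≤ 1) (hη : 0 < η) (p : E3 × E3) (b : E3) :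
    δ * virialWeight A δ η p + ⟪b, virialField A δ η p.1⟫_ℝ ≤
      fderiv ℝ (virial A δ η) p (vhat p.2, b) := by
  rw [fderiv_virial_apply A δ hη, vhat, map_smul, map_smul, real_inner_smul_left, virialWeight,
    virialField, ContinuousLinearMap.adjoint_inner_right, real_inner_comm]
  have h := mul_le_mul_of_nonneg_left (le_inner_fderiv_radialField hδ hη (A p.1) (A p.2))
    (inv_nonneg.2 (Real.sqrt_nonneg (1 + ‖p.2‖ ^ 2)))
  rw [div_eq_mul_inv]
  linarith

end Virial

/-! ### The virial inequality -/

section VirialInequality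

variable {V : Type*} [NormedAddCommGroup V] [InnerProductSpace ℝ V] {A : E3 →L[ℝ] V}
  {f : ℝ → E3 → E3 → ℝ} {T D m δ η B t : ℝ}

theorem IsPhaseDensity.integrable_virialWeight (hd : IsPhaseDensity D m fun p => f t p.1 p.2)
    (hA : ‖A‖ ≤ 1) (hδ : δ ≤ 1) (hη : 0 < η) :
    Integrable fun p : E3 × E3 => virialWeight A δ η p * f t p.1 p.2 :=
  hd.integrable_mul_of_le (measurable_virialWeight A δ η) fun p =>
    (abs_of_nonneg (virialWeight_nonneg A δ η p)).trans_le (virialWeight_le hA hδ hη p)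

theorem IsPhaseDensity.mul_integral_virialWeight_le [CompleteSpace V]
    (hd : IsPhaseDensity D m fun p => f t p.1 p.2) (hA : ‖A‖ ≤ 1) (h0 : 0 ≤ δ) (hδ : δ ≤ 1)
    (hη : 0 < η) :
    δ * ∫ p : E3 × E3, virialWeight A δ η p * f t p.1 p.2 ≤
      ∫ p : E3 × E3, fderiv ℝ (virial A δ η) p (phaseVelocity f t p) * f t p.1 p.2 := by
  have hΨ := isTestFunction_virial hA h0 hδ hη
  have hfield := measurable_virialField A δ hη
  have hfield_le := norm_virialField_le (η := η) hA h0 hδ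
  have hweight := (hd.integrable_virialWeight hA hδ hη).const_mul δ
  have hforce : Integrable fun p : E3 × E3 =>
      ⟪rvpField f t p.1, virialField A δ η p.1⟫_ℝ * f t p.1 p.2 :=
    hd.integrable_inner_coulombField hfield hfield_le
  have hforce_nonneg : 0 ≤ ∫ p : E3 × E3,
      ⟪rvpField f t p.1, virialField A δ η p.1⟫_ℝ * f t p.1 p.2 :=
    hd.integral_inner_coulombField_nonneg hfield hfield_le (virialField_monotone h0 hδ hη)
  calc δ * ∫ p : E3 × E3, virialWeight A δ η p * f t p.1 p.2
      ≤ (∫ p : E3 × E3, δ * (virialWeight A δ η p * f t p.1 p.2)) +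
        ∫ p : E3 × E3, ⟪rvpField f t p.1, virialField A δ η p.1⟫_ℝ * f t p.1 p.2 := by
        rw [integral_const_mul]
        exact le_add_of_nonneg_right hforce_nonneg
    _ ≤ ∫ p : E3 × E3, fderiv ℝ (virial A δ η) p (phaseVelocity f t p) * f t p.1 p.2 := by
        rw [← integral_add hweight hforce]
        refine integral_mono (hweight.add hforce) (hd.integrable_mul_of_le
          (hd.measurable_fderiv_phaseVelocity hΨ.contDiff)
          (hd.abs_fderiv_phaseVelocity_le hΨ)) fun p => ?_
        refine le_trans (le_of_eq ?_) (mul_le_mul_of_nonneg_right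
          (virialWeight_add_inner_le_fderiv hδ hη p (rvpField f t p.1)) (hd.nonneg p))
        ring

theorem IsPhaseDensity.integrable_spatialWeight (hd : IsPhaseDensity D m fun p => f t p.1 p.2)
    (h0 : 0 ≤ δ) (hδ : δ ≤ 1) :
    Integrable fun p : E3 × E3 => ‖p.1‖ ^ δ * ‖p.2‖ * f t p.1 p.2 :=
  hd.integrable_mul_of_le (c := 1) (by fun_prop) fun p => by
    rw [abs_of_nonneg (by positivity), one_mul]
    exact rpow_norm_mul_norm_le_phaseWeight_pow h0 hδ p

theorem IsPhaseDensity.abs_integral_virial_le (hd : IsPhaseDensity D m fun p => f t p.1 p.2)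
    (hA : ‖A‖ ≤ 1) (h0 : 0 ≤ δ) (hδ : δ ≤ 1) :
    |∫ p : E3 × E3, virial A δ η p * f t p.1 p.2| ≤
      ∫ p : E3 × E3, ‖p.1‖ ^ δ * ‖p.2‖ * f t p.1 p.2 :=
  norm_integral_le_of_norm_le (f := fun p : E3 × E3 => virial A δ η p * f t p.1 p.2)
    (hd.integrable_spatialWeight h0 hδ) (.of_forall fun p => by
      rw [norm_mul, Real.norm_of_nonneg (hd.nonneg p)]
      exact mul_le_mul_of_nonneg_right (abs_virial_le hA h0 hδ p) (hd.nonneg p))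

namespace IsRVPSolution

theorem aemeasurable_ofReal_mul (hf : IsRVPSolution (Icc 0 T) f) {w : E3 × E3 → ℝ}
    (hw : Measurable w) :
    AEMeasurable (fun z : ℝ × E3 × E3 => ENNReal.ofReal (w z.2 * f z.1 z.2.1 z.2.2))
      ((volume.restrict (Icc 0 T)).prod volume) := by
  have hf' := hf.2.1.continuousOn.aemeasurable (μ := volume)
    (measurableSet_Icc.prod MeasurableSet.univ)
  rw [Measure.volume_eq_prod, ← restrict_prod_eq_restrict_prod_univ] at hf'
  exact ((hw.comp measurable_snd).aemeasurable.mul hf').ennreal_ofReal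

theorem lintegral_virialWeight_le [CompleteSpace V] (hT : 0 < T) (hf : IsRVPSolution (Icc 0 T) f)
    (hd : ∀ t ∈ Icc 0 T, IsPhaseDensity D m fun p => f t p.1 p.2) (hA : ‖A‖ ≤ 1) (h0 : 0 < δ)
    (hδ : δ ≤ 1) (hB : ∀ t ∈ Icc 0 T, ∫ p : E3 × E3, ‖p.1‖ ^ δ * ‖p.2‖ * f t p.1 p.2 ≤ B)
    (hη : 0 < η) :
    ∫⁻ t in Icc 0 T, ∫⁻ p : E3 × E3, ENNReal.ofReal (virialWeight A δ η p * f t p.1 p.2) ≤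
      ENNReal.ofReal (2 * B / δ) := by
  obtain ⟨hint, hweak⟩ := hf.integrableOn_and_weakForm hT hd
    (isTestFunction_virial hA h0.le hδ hη)
  set P : ℝ → ℝ := fun t =>
    ∫ p : E3 × E3, fderiv ℝ (virial A δ η) p (phaseVelocity f t p) * f t p.1 p.2
  have hnonneg (t : ℝ) (ht : t ∈ Icc 0 T) (p : E3 × E3) :
      0 ≤ virialWeight A δ η p * f t p.1 p.2 :=
    mul_nonneg (virialWeight_nonneg A δ η p) ((hd t ht).nonneg p)
  have hend (t : ℝ) (ht : t ∈ Icc 0 T) := abs_le.1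
    (((hd t ht).abs_integral_virial_le (η := η) hA h0.le hδ).trans (hB t ht))
  have hweight (t : ℝ) (ht : t ∈ Icc 0 T) :
      ∫ p : E3 × E3, virialWeight A δ η p * f t p.1 p.2 ≤ P t / δ := by
    rw [le_div_iff₀' h0]
    exact (hd t ht).mul_integral_virialWeight_le hA h0.le hδ hη
  calc ∫⁻ t in Icc 0 T, ∫⁻ p : E3 × E3, ENNReal.ofReal (virialWeight A δ η p * f t p.1 p.2)
      ≤ ∫⁻ t in Icc 0 T, ENNReal.ofReal (P t / δ) := by
        refine setLIntegral_mono' measurableSet_Icc fun t ht => ?_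
        rw [← ofReal_integral_eq_lintegral_ofReal ((hd t ht).integrable_virialWeight hA hδ hη)
          (.of_forall (hnonneg t ht))]
        exact ENNReal.ofReal_le_ofReal (hweight t ht)
    _ = ENNReal.ofReal ((∫ t in Icc 0 T, P t) / δ) := by
        rw [← integral_div, ofReal_integral_eq_lintegral_ofReal (hint.div_const δ)
          (ae_restrict_of_forall_mem measurableSet_Icc fun t ht =>
            (integral_nonneg (hnonneg t ht)).trans (hweight t ht))]
    _ ≤ ENNReal.ofReal (2 * B / δ) := by
        rw [hweak]
        gcongr
        linarith [(hend T (right_mem_Icc.2 hT.le)).2, (hend 0 (left_mem_Icc.2 hT.le)).1]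

theorem lintegral_virialWeight_zero_le [CompleteSpace V] (hT : 0 < T)
    (hf : IsRVPSolution (Icc 0 T) f)
    (hd : ∀ t ∈ Icc 0 T, IsPhaseDensity D m fun p => f t p.1 p.2) (hA : ‖A‖ ≤ 1) (h0 : 0 < δ)
    (hδ : δ < 1) (hB : ∀ t ∈ Icc 0 T, ∫ p : E3 × E3, ‖p.1‖ ^ δ * ‖p.2‖ * f t p.1 p.2 ≤ B) :
    ∫⁻ t in Icc 0 T, ∫⁻ p : E3 × E3, ENNReal.ofReal (virialWeight A δ 0 p * f t p.1 p.2) ≤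
      ENNReal.ofReal (2 * B / δ) := by
  have hη (n : ℕ) : (0 : ℝ) < 1 / (n + 1) := by positivity
  have hmeas (η : ℝ) := hf.aemeasurable_ofReal_mul (measurable_virialWeight A δ η)
  have hlim (z : ℝ × E3 × E3) :
      ENNReal.ofReal (virialWeight A δ 0 z.2 * f z.1 z.2.1 z.2.2) ≤ liminf (fun n : ℕ =>
        ENNReal.ofReal (virialWeight A δ (1 / (n + 1)) z.2 * f z.1 z.2.1 z.2.2)) atTop := by
    rcases eq_or_ne (A z.2.1) 0 with hz | hz
    · simp [virialWeight_zero_of_apply_eq_zero hδ.ne hz]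
    · exact ((ENNReal.continuous_ofReal.tendsto _).comp (((tendsto_virialWeight hz).comp
        tendsto_one_div_add_atTop_nhds_zero_nat).mul_const _)).liminf_eq.ge
  calc ∫⁻ t in Icc 0 T, ∫⁻ p : E3 × E3, ENNReal.ofReal (virialWeight A δ 0 p * f t p.1 p.2)
      = ∫⁻ z : ℝ × E3 × E3, ENNReal.ofReal (virialWeight A δ 0 z.2 * f z.1 z.2.1 z.2.2)
          ∂(volume.restrict (Icc 0 T)).prod volume := (lintegral_prod _ (hmeas 0)).symm
    _ ≤ _ := lintegral_mono hlim
    _ ≤ _ := lintegral_liminf_le' fun n => hmeas _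
    _ ≤ ENNReal.ofReal (2 * B / δ) := by
        refine liminf_le_of_le (by isBoundedDefault) fun b hb => ?_
        obtain ⟨n, hn⟩ := hb.exists
        refine hn.trans ?_
        rw [lintegral_prod _ (hmeas _)]
        exact hf.lintegral_virialWeight_le hT hd hA h0 hδ.le hB (hη n)

end IsRVPSolution

end VirialInequality

/-! ### The horizontal projection -/

/-- The horizontal projection `x ↦ x̸ = (x₁, x₂)`. -/
def horizontal : E3 →L[ℝ] EuclideanSpace ℝ (Fin 2) :=
  (PiLp.continuousLinearEquiv 2 ℝ fun _ : Fin 2 => ℝ).symm.toContinuousLinearMap ∘L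
    ContinuousLinearMap.pi fun i => EuclideanSpace.proj ((2 : Fin 3).succAbove i)

theorem norm_horizontal_apply (x : E3) : ‖horizontal x‖ = slashN x := by
  rw [EuclideanSpace.norm_eq, Fin.sum_univ_two]
  simp only [Real.norm_eq_abs, sq_abs]
  rfl

theorem slashN_le_norm (x : E3) : slashN x ≤ ‖x‖ := by
  rw [EuclideanSpace.norm_eq, Fin.sum_univ_three]
  simp only [Real.norm_eq_abs, sq_abs]
  exact Real.sqrt_le_sqrt (le_add_of_nonneg_right (sq_nonneg _))

theorem norm_horizontal_le : ‖horizontal‖ ≤ 1 :=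
  horizontal.opNorm_le_bound zero_le_one fun x => by
    rw [one_mul, norm_horizontal_apply]
    exact slashN_le_norm x

theorem measurePreserving_prodMk_horizontal :
    MeasurePreserving (fun x : E3 => (x 2, horizontal x)) :=
  ((MeasurePreserving.id volume).prod (PiLp.volume_preserving_toLp (Fin 2))).comp
    ((volume_preserving_piFinSuccAbove (fun _ : Fin 3 => ℝ) 2).comp
      (PiLp.volume_preserving_ofLp (Fin 3)))

/-! ### Concentration near the axis -/

/-- The weight `|v̸|^{2+δ} / (|x̸|^{1-δ} √(1+|v|²))`. -/
def axisWeight (δ : ℝ) (p : E3 × E3) : ℝ :=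
  slashN p.2 ^ (2 + δ) / (slashN p.1 ^ (1 - δ) * √(1 + ‖p.2‖ ^ 2))

/-- An integrable kernel dominating, for bounded densities, the part of the singularity of
`axisWeight` at the axis that is not controlled by moments. -/
def axisKernel (p : E3 × E3) : ℝ :=
  (1 + |p.1 2|) ^ (-2 : ℝ) * singularKernel (3 / 2) (horizontal p.1) * (1 + ‖p.2‖) ^ (-4 : ℝ)

theorem axisKernel_nonneg (p : E3 × E3) : 0 ≤ axisKernel p := by
  have := singularKernel_nonneg (3 / 2) (horizontal p.1)
  unfold axisKernel
  positivity

theorem integrable_axisKernel : Integrable axisKernel := by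
  have hvertical : Integrable fun s : ℝ => (1 + ‖s‖) ^ (-2 : ℝ) :=
    integrable_one_add_norm (by norm_num)
  have hspace : Integrable fun z : ℝ × EuclideanSpace ℝ (Fin 2) =>
      (1 + ‖z.1‖) ^ (-2 : ℝ) * singularKernel (3 / 2) z.2 :=
    hvertical.mul_prod (integrable_singularKernel volume (by norm_num))
  exact (measurePreserving_prodMk_horizontal.integrable_comp_of_integrable hspace).mul_prod
    (integrable_one_add_norm (by norm_num))

section AxisWeight

variable {δ S D : ℝ} {g : E3 × E3 → ℝ}

theorem axisWeight_eq_rpow_mul_virialWeight (hδ : 0 ≤ δ) (p : E3 × E3) :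
    axisWeight δ p = slashN p.2 ^ δ * virialWeight horizontal δ 0 p := by
  have hx : 0 ≤ slashN p.1 := Real.sqrt_nonneg _
  have hv : 0 ≤ slashN p.2 := Real.sqrt_nonneg _
  have hsing : (slashN p.1 ^ 2) ^ ((δ - 1) / 2) = (slashN p.1 ^ (1 - δ))⁻¹ := by
    rw [← Real.rpow_neg hx, ← Real.rpow_two, ← Real.rpow_mul hx]
    ring_nf
  rw [axisWeight, virialWeight, norm_horizontal_apply, norm_horizontal_apply, zero_pow two_ne_zero,
    zero_add, hsing, Real.rpow_add' hv (by linarith), Real.rpow_two]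
  field

theorem axisWeight_le_rpow_mul_virialWeight (hδ : 0 ≤ δ) {p : E3 × E3} (hp : slashN p.2 ≤ S) :
    axisWeight δ p ≤ S ^ δ * virialWeight horizontal δ 0 p := by
  rw [axisWeight_eq_rpow_mul_virialWeight hδ]
  exact mul_le_mul_of_nonneg_right (Real.rpow_le_rpow (Real.sqrt_nonneg _) hp hδ)
    (virialWeight_nonneg _ _ _ _)

theorem slashN_rpow_le_phaseWeight_pow (h0 : 0 ≤ δ) (hδ : δ ≤ 1) (p : E3 × E3) :
    slashN p.2 ^ (2 + δ) ≤ phaseWeight p ^ 3 :=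
  calc slashN p.2 ^ (2 + δ) ≤ phaseWeight p ^ (2 + δ) :=
        Real.rpow_le_rpow (Real.sqrt_nonneg _) ((slashN_le_norm p.2).trans
          (by linarith [one_add_norm_snd_le_phaseWeight p])) (by linarith)
    _ ≤ phaseWeight p ^ (3 : ℝ) :=
        Real.rpow_le_rpow_of_exponent_le (one_le_phaseWeight p) (by linarith)
    _ = phaseWeight p ^ 3 := by norm_cast

theorem singularKernel_div_phaseWeight_pow_le (p : E3 × E3) :
    singularKernel (3 / 2) (horizontal p.1) / phaseWeight p ^ 6 ≤ axisKernel p := by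
  have hdecay : (phaseWeight p ^ 6)⁻¹ ≤ (1 + |p.1 2|) ^ (-2 : ℝ) * (1 + ‖p.2‖) ^ (-4 : ℝ) := by
    have hx : 1 + |p.1 2| ≤ phaseWeight p :=
      (add_le_add_right (PiLp.norm_apply_le p.1 2) 1).trans (one_add_norm_fst_le_phaseWeight p)
    rw [Real.rpow_neg (by positivity), Real.rpow_neg (by positivity), ← mul_inv]
    norm_cast
    rw [show 6 = 2 + 4 from rfl, pow_add]
    gcongr
    exact one_add_norm_snd_le_phaseWeight p
  calc singularKernel (3 / 2) (horizontal p.1) / phaseWeight p ^ 6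
      ≤ singularKernel (3 / 2) (horizontal p.1) *
        ((1 + |p.1 2|) ^ (-2 : ℝ) * (1 + ‖p.2‖) ^ (-4 : ℝ)) :=
        mul_le_mul_of_nonneg_left hdecay (singularKernel_nonneg _ _)
    _ = axisKernel p := by unfold axisKernel; ring

theorem axisWeight_le_axisKernel_add_phaseWeight_pow (h0 : 0 ≤ δ) (hδ : δ ≤ 1) (p : E3 × E3) :
    axisWeight δ p ≤ axisKernel p + phaseWeight p ^ 21 := by
  have hQ := one_le_phaseWeight p
  calc axisWeight δ p
      = slashN p.2 ^ (2 + δ) * ‖horizontal p.1‖ ^ (-(1 - δ)) / √(1 + ‖p.2‖ ^ 2) := by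
        rw [axisWeight, Real.rpow_neg (norm_nonneg _), norm_horizontal_apply]
        field
    _ ≤ slashN p.2 ^ (2 + δ) * ‖horizontal p.1‖ ^ (-(1 - δ)) :=
        div_le_self (mul_nonneg (Real.rpow_nonneg (Real.sqrt_nonneg _) _) (by positivity))
          (Real.one_le_sqrt.2 (le_add_of_nonneg_right (sq_nonneg _)))
    _ ≤ phaseWeight p ^ 3 * (singularKernel (3 / 2) (horizontal p.1) / phaseWeight p ^ 9 +
          (phaseWeight p ^ 9) ^ 2) := by
        gcongr
        · exact slashN_rpow_le_phaseWeight_pow h0 hδ p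
        · exact rpow_neg_le_singularKernel_div_add_pow (by linarith) (by norm_num; linarith)
            (one_le_pow₀ hQ) _
    _ = singularKernel (3 / 2) (horizontal p.1) / phaseWeight p ^ 6 + phaseWeight p ^ 21 := by
        field
    _ ≤ axisKernel p + phaseWeight p ^ 21 := by
        gcongr
        exact singularKernel_div_phaseWeight_pow_le p

theorem axisWeight_mul_le (hg : ∀ p, 0 ≤ g p) (hgD : ∀ p, g p ≤ D) (h0 : 0 ≤ δ) (hδ : δ ≤ 1)
    (hS : 0 < S) (k : ℕ) (p : E3 × E3) :
    axisWeight δ p * g p ≤ S ^ δ * (virialWeight horizontal δ 0 p * g p) +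
      (phaseWeight p ^ (k + 21) * g p / S ^ k + D * axisKernel p) := by
  have hD : 0 ≤ D := (hg p).trans (hgD p)
  have hgp := hg p
  have hQ := one_le_phaseWeight p
  have hV := virialWeight_nonneg horizontal δ 0 p
  have hK := axisKernel_nonneg p
  rcases le_or_gt (slashN p.2) S with hv | hv
  · have hrem : 0 ≤ phaseWeight p ^ (k + 21) * g p / S ^ k + D * axisKernel p := by positivity
    have hle := mul_le_mul_of_nonneg_right (axisWeight_le_rpow_mul_virialWeight h0 hv) hgp
    linarith
  · have hSQ : S ≤ phaseWeight p := by
      linarith [slashN_le_norm p.2, one_add_norm_snd_le_phaseWeight p]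
    have hpow : phaseWeight p ^ 21 * g p ≤ phaseWeight p ^ (k + 21) * g p / S ^ k := by
      rw [le_div_iff₀' (by positivity), ← mul_assoc, pow_add]
      gcongr
    have hle := mul_le_mul_of_nonneg_right
      (axisWeight_le_axisKernel_add_phaseWeight_pow h0 hδ p) hgp
    have hkernel := mul_le_mul_of_nonneg_right (hgD p) hK
    have hvirial : 0 ≤ S ^ δ * (virialWeight horizontal δ 0 p * g p) := by positivity
    linarith

theorem lintegral_axisWeight_mul_le {P : ℝ} {k : ℕ} (hgm : Measurable g) (hg : ∀ p, 0 ≤ g p)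
    (hgD : ∀ p, g p ≤ D) (h0 : 0 ≤ δ) (hδ : δ ≤ 1) (hS : 0 < S)
    (hk : Integrable fun p => phaseWeight p ^ (k + 21) * g p)
    (hP : ∫ p, phaseWeight p ^ (k + 21) * g p ≤ P) :
    ∫⁻ p, ENNReal.ofReal (axisWeight δ p * g p) ≤
      ENNReal.ofReal (S ^ δ) * (∫⁻ p, ENNReal.ofReal (virialWeight horizontal δ 0 p * g p)) +
        ENNReal.ofReal (P / S ^ k + D * ∫ p, axisKernel p) := by
  have hD : 0 ≤ D := (hg 0).trans (hgD 0)
  have hvirial : Measurable fun p => ENNReal.ofReal (virialWeight horizontal δ 0 p * g p) :=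
    ((measurable_virialWeight _ _ _).mul hgm).ennreal_ofReal
  have hmoment := hk.div_const (S ^ k)
  have hkernel := integrable_axisKernel.const_mul D
  have hrem_integrable :
      Integrable fun p => phaseWeight p ^ (k + 21) * g p / S ^ k + D * axisKernel p :=
    hmoment.add hkernel
  have hrem (p : E3 × E3) :
      0 ≤ phaseWeight p ^ (k + 21) * g p / S ^ k + D * axisKernel p := by
    have := one_le_phaseWeight p
    have := axisKernel_nonneg p
    have := hg p
    positivity
  calc ∫⁻ p, ENNReal.ofReal (axisWeight δ p * g p)
      ≤ ∫⁻ p, (ENNReal.ofReal (S ^ δ) * ENNReal.ofReal (virialWeight horizontal δ 0 p * g p) +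
          ENNReal.ofReal (phaseWeight p ^ (k + 21) * g p / S ^ k + D * axisKernel p)) := by
        refine lintegral_mono fun p => ?_
        rw [← ENNReal.ofReal_mul (by positivity)]
        exact (ENNReal.ofReal_le_ofReal (axisWeight_mul_le hg hgD h0 hδ hS k p)).trans
          ENNReal.ofReal_add_le
    _ = ENNReal.ofReal (S ^ δ) * (∫⁻ p, ENNReal.ofReal (virialWeight horizontal δ 0 p * g p)) +
          ENNReal.ofReal ((∫ p, phaseWeight p ^ (k + 21) * g p) / S ^ k +
            D * ∫ p, axisKernel p) := by
        rw [lintegral_add_left (hvirial.const_mul _),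
          lintegral_const_mul' _ _ ENNReal.ofReal_ne_top,
          ← ofReal_integral_eq_lintegral_ofReal hrem_integrable (.of_forall hrem),
          integral_add hmoment hkernel, integral_div, integral_const_mul]
    _ ≤ _ := by gcongr

end AxisWeight

theorem IsRVPSolution.lintegral_axisWeight_le {T D δ m B S P : ℝ} {k : ℕ} (hT : 0 < T)
    {f : ℝ → E3 → E3 → ℝ} (hf : IsRVPSolution (Icc 0 T) f)
    (hd : ∀ t ∈ Icc 0 T, IsPhaseDensity D m fun p => f t p.1 p.2) (h0 : 0 < δ) (hδ : δ < 1)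
    (hB : ∀ t ∈ Icc 0 T, ∫ p : E3 × E3, ‖p.1‖ ^ δ * ‖p.2‖ * f t p.1 p.2 ≤ B) (hS : 0 < S)
    (hk : ∀ t ∈ Icc 0 T, Integrable fun p : E3 × E3 => phaseWeight p ^ (k + 21) * f t p.1 p.2)
    (hP : ∀ t ∈ Icc 0 T, ∫ p : E3 × E3, phaseWeight p ^ (k + 21) * f t p.1 p.2 ≤ P) :
    ∫⁻ t in Icc 0 T, ∫⁻ p : E3 × E3, ENNReal.ofReal (axisWeight δ p * f t p.1 p.2) ≤
      ENNReal.ofReal (S ^ δ * (2 * B / δ) + (P / S ^ k + D * ∫ p, axisKernel p) * T) := by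
  have hd0 := hd 0 (left_mem_Icc.2 hT.le)
  have hB0 : 0 ≤ B := (integral_nonneg fun p => mul_nonneg (by positivity)
    (hd0.nonneg p)).trans (hB 0 (left_mem_Icc.2 hT.le))
  have hP0 : 0 ≤ P := (integral_nonneg fun p => mul_nonneg
    (pow_nonneg (zero_le_one.trans (one_le_phaseWeight p)) _) (hd0.nonneg p)).trans
    (hP 0 (left_mem_Icc.2 hT.le))
  have hK0 : 0 ≤ D * ∫ p, axisKernel p :=
    mul_nonneg ((hd0.nonneg 0).trans (hd0.le_bound 0)) (integral_nonneg axisKernel_nonneg)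
  calc ∫⁻ t in Icc 0 T, ∫⁻ p : E3 × E3, ENNReal.ofReal (axisWeight δ p * f t p.1 p.2)
      ≤ ∫⁻ t in Icc 0 T, (ENNReal.ofReal (S ^ δ) *
          (∫⁻ p : E3 × E3, ENNReal.ofReal (virialWeight horizontal δ 0 p * f t p.1 p.2)) +
          ENNReal.ofReal (P / S ^ k + D * ∫ p, axisKernel p)) :=
        setLIntegral_mono' measurableSet_Icc fun t ht =>
          lintegral_axisWeight_mul_le (hd t ht).continuous.measurable (hd t ht).nonneg
            (hd t ht).le_bound h0.le hδ.le hS (hk t ht) (hP t ht)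
    _ = ENNReal.ofReal (S ^ δ) * (∫⁻ t in Icc 0 T, ∫⁻ p : E3 × E3,
          ENNReal.ofReal (virialWeight horizontal δ 0 p * f t p.1 p.2)) +
        ENNReal.ofReal (P / S ^ k + D * ∫ p, axisKernel p) * ENNReal.ofReal T := by
        rw [lintegral_add_right _ measurable_const,
          lintegral_const_mul' _ _ ENNReal.ofReal_ne_top, setLIntegral_const, Real.volume_Icc,
          sub_zero]
    _ ≤ ENNReal.ofReal (S ^ δ) * ENNReal.ofReal (2 * B / δ) +
        ENNReal.ofReal (P / S ^ k + D * ∫ p, axisKernel p) * ENNReal.ofReal T := by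
        gcongr
        exact hf.lintegral_virialWeight_zero_le hT hd norm_horizontal_le h0 hδ hB
    _ = _ := by
        rw [← ENNReal.ofReal_mul (by positivity), ← ENNReal.ofReal_mul (by positivity),
          ← ENNReal.ofReal_add (by positivity) (by positivity)]

/-! ### The spatial moment and the choice of parameters -/

theorem rpow_le_rpow_mul_one_add_div_pow {r b l : ℝ} {n : ℕ} (hr : 0 ≤ r) (hb : 0 ≤ b)
    (hbn : b ≤ n) (hl : 0 < l) : r ^ b ≤ l ^ b * (1 + r ^ n / l ^ n) :=
  calc r ^ b = l ^ b * (r / l) ^ b := by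
        rw [← Real.mul_rpow hl.le (by positivity), mul_div_cancel₀ _ hl.ne']
    _ ≤ l ^ b * (1 + (r / l) ^ n) := by
        gcongr
        exact rpow_le_one_add_pow (by positivity) hb hbn
    _ = l ^ b * (1 + r ^ n / l ^ n) := by rw [div_pow]

theorem rpow_norm_mul_norm_le {δ l : ℝ} {n : ℕ} (h0 : 0 ≤ δ) (hδ : δ ≤ n) (hl : 0 < l)
    (p : E3 × E3) :
    ‖p.1‖ ^ δ * ‖p.2‖ ≤ l ^ δ * ((1 + ‖p.2‖) + phaseWeight p ^ (n + 1) / l ^ n) := by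
  have hx : ‖p.1‖ ≤ phaseWeight p := by linarith [one_add_norm_fst_le_phaseWeight p]
  have hv : ‖p.2‖ ≤ phaseWeight p := by linarith [one_add_norm_snd_le_phaseWeight p]
  calc ‖p.1‖ ^ δ * ‖p.2‖ ≤ l ^ δ * (1 + ‖p.1‖ ^ n / l ^ n) * ‖p.2‖ := by
        gcongr
        exact rpow_le_rpow_mul_one_add_div_pow (norm_nonneg _) h0 hδ hl
    _ = l ^ δ * (‖p.2‖ + ‖p.1‖ ^ n * ‖p.2‖ / l ^ n) := by ring
    _ ≤ l ^ δ * ((1 + ‖p.2‖) + phaseWeight p ^ (n + 1) / l ^ n) := by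
        have hQ := zero_le_one.trans (one_le_phaseWeight p)
        rw [pow_succ]
        gcongr
        linarith

theorem integral_rpow_norm_mul_norm_le {D δ l : ℝ} {n : ℕ} {g : E3 × E3 → ℝ} (hg : ∀ p, 0 ≤ g p)
    (h0 : 0 ≤ δ) (hδ : δ ≤ n) (hl : 0 < l)
    (h1 : Integrable fun p : E3 × E3 => (1 + ‖p.2‖) * g p)
    (h1D : ∫ p : E3 × E3, (1 + ‖p.2‖) * g p ≤ D)
    (hn : Integrable fun p : E3 × E3 => phaseWeight p ^ (n + 1) * g p)
    (hnl : ∫ p : E3 × E3, phaseWeight p ^ (n + 1) * g p ≤ l ^ n) :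
    ∫ p : E3 × E3, ‖p.1‖ ^ δ * ‖p.2‖ * g p ≤ l ^ δ * (D + 1) := by
  have hn' := hn.div_const (l ^ n)
  calc ∫ p : E3 × E3, ‖p.1‖ ^ δ * ‖p.2‖ * g p
      ≤ ∫ p : E3 × E3, l ^ δ * ((1 + ‖p.2‖) * g p + phaseWeight p ^ (n + 1) * g p / l ^ n) := by
        refine integral_mono_of_nonneg (.of_forall fun p => mul_nonneg (by positivity) (hg p))
          ((h1.add hn').const_mul _) (.of_forall fun p => ?_)
        refine (mul_le_mul_of_nonneg_right (rpow_norm_mul_norm_le h0 hδ hl p) (hg p)).trans_eq ?_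
        ring
    _ = l ^ δ * ((∫ p : E3 × E3, (1 + ‖p.2‖) * g p) +
          (∫ p : E3 × E3, phaseWeight p ^ (n + 1) * g p) / l ^ n) := by
        rw [integral_const_mul, integral_add h1 hn', integral_div]
    _ ≤ l ^ δ * (D + 1) := by
        gcongr
        exact div_le_one_of_le₀ hnl (by positivity)

theorem IsPhaseDensity.integrable_one_add_norm_snd_mul {D m : ℝ} {g : E3 × E3 → ℝ}
    (h : IsPhaseDensity D m g) : Integrable fun p : E3 × E3 => (1 + ‖p.2‖) * g p :=
  h.integrable_mul_of_le (c := 1) (by fun_prop) fun p => by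
    rw [abs_of_nonneg (by positivity), one_mul]
    exact (one_add_norm_snd_le_phaseWeight p).trans
      (le_self_pow₀ (one_le_phaseWeight p) (by norm_num))

theorem isPhaseDensity_of_moment {D P : ℝ} {n : ℕ} {g : E3 × E3 → ℝ} (hc : Continuous g)
    (hg : ∀ p, 0 ≤ g p) (hgD : ∀ p, g p ≤ D) (hn : 16 ≤ n)
    (hi : Integrable fun p => phaseWeight p ^ n * g p)
    (hP : ∫ p, phaseWeight p ^ n * g p ≤ P) : IsPhaseDensity D P g := by
  have hle (p : E3 × E3) : phaseWeight p ^ 16 * g p ≤ phaseWeight p ^ n * g p :=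
    mul_le_mul_of_nonneg_right (pow_le_pow_right₀ (one_le_phaseWeight p) hn) (hg p)
  have hnonneg (p : E3 × E3) : 0 ≤ phaseWeight p ^ 16 * g p :=
    mul_nonneg (pow_nonneg (zero_le_one.trans (one_le_phaseWeight p)) _) (hg p)
  have hint : Integrable fun p => phaseWeight p ^ 16 * g p :=
    hi.mono' ((continuous_phaseWeight.pow 16).mul hc).aestronglyMeasurable
      (.of_forall fun p => (Real.norm_of_nonneg (hnonneg p)).trans_le (hle p))
  exact ⟨hc, hg, hgD, hint, (integral_mono hint hi hle).trans hP⟩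

theorem one_add_le_rpow_inv {T l : ℝ} {n : ℕ} (hT : 0 ≤ T) (hl : 1 ≤ l) (hn : n ≠ 0)
    (h : (1 + T) ^ (n * n) ≤ l ^ (n - 1)) : 1 + T ≤ l ^ ((1 : ℝ) / n) := by
  refine (pow_le_pow_iff_left₀ (by positivity) (by positivity) (mul_ne_zero hn hn)).1 ?_
  calc (1 + T) ^ (n * n) ≤ l ^ (n - 1) := h
    _ ≤ l ^ n := pow_le_pow_right₀ hl (Nat.sub_le n 1)
    _ = (l ^ ((1 : ℝ) / n)) ^ (n * n) := by
        rw [pow_mul, one_div, Real.rpow_inv_natCast_pow (by positivity) hn]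

theorem IsRVPSolution.lintegral_axisWeight_le_rpow {T D δ l : ℝ} {n : ℕ} (hT : 0 < T)
    {f : ℝ → E3 → E3 → ℝ} (hf : IsRVPSolution (Icc 0 T) f)
    (hD : ∀ t ∈ Icc 0 T, ∀ x v, f t x v ≤ D) (h0 : 0 < δ) (hδ : δ < 1) (hn : 41 ≤ n) (hl : 1 ≤ l)
    (h1D : ∀ t ∈ Icc 0 T, ∫ p : E3 × E3, (1 + ‖p.2‖) * f t p.1 p.2 ≤ D)
    (hi : ∀ t ∈ Icc 0 T, Integrable fun p : E3 × E3 => phaseWeight p ^ n * f t p.1 p.2)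
    (hil : ∀ t ∈ Icc 0 T, ∫ p : E3 × E3, phaseWeight p ^ n * f t p.1 p.2 ≤ l ^ (n - 1))
    (hTl : (1 + T) ^ (n * n) ≤ l ^ (n - 1)) :
    ∫⁻ t in Icc 0 T, ∫⁻ p : E3 × E3, ENNReal.ofReal (axisWeight δ p * f t p.1 p.2) ≤
      ENNReal.ofReal (2 * (D + 1) / δ * l ^ (3 * δ) +
        (1 + D * ∫ p, axisKernel p) * l ^ ((1 : ℝ) / n)) := by
  have hl0 : 0 < l := by linarith
  have hT' := one_add_le_rpow_inv hT.le hl (by omega) hTl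
  have hd (t : ℝ) (ht : t ∈ Icc 0 T) : IsPhaseDensity D (l ^ (n - 1)) fun p => f t p.1 p.2 :=
    isPhaseDensity_of_moment (contDiff_slice hf.2.1 ht).continuous (fun p => hf.1 t ht _ _)
      (fun p => hD t ht _ _) (by omega) (hi t ht) (hil t ht)
  have hD0 : 0 ≤ D := (hf.1 0 (left_mem_Icc.2 hT.le) 0 0).trans (hD 0 (left_mem_Icc.2 hT.le) 0 0)
  have hK0 : 0 ≤ ∫ p, axisKernel p := integral_nonneg axisKernel_nonneg
  obtain ⟨k, rfl⟩ : ∃ k, n = k + 21 := ⟨n - 21, by omega⟩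
  have hδk : δ ≤ (k + 20 : ℕ) := hδ.le.trans (by norm_cast; omega)
  have hB (t : ℝ) (ht : t ∈ Icc 0 T) :
      ∫ p : E3 × E3, ‖p.1‖ ^ δ * ‖p.2‖ * f t p.1 p.2 ≤ l ^ δ * (D + 1) :=
    integral_rpow_norm_mul_norm_le (hd t ht).nonneg h0.le hδk hl0
      (hd t ht).integrable_one_add_norm_snd_mul (h1D t ht) (hi t ht) (hil t ht)
  refine (hf.lintegral_axisWeight_le hT hd h0 hδ hB (S := l ^ 2) (by positivity) hi hil).trans
    (ENNReal.ofReal_le_ofReal (add_le_add (le_of_eq ?_) ?_))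
  · have hexp : l ^ (3 * δ) = (l ^ 2) ^ δ * l ^ δ := by
      rw [← Real.mul_rpow (by positivity) hl0.le, ← pow_succ, ← Real.rpow_natCast_mul hl0.le]
      norm_num
    rw [hexp]
    ring
  · have hpow : l ^ (k + 21 - 1) / (l ^ 2) ^ k ≤ 1 := by
      rw [div_le_one (by positivity), ← pow_mul]
      exact pow_le_pow_right₀ hl (by omega)
    gcongr
    linarith

/-! ### The estimate -/

theorem one_add_pow_le_tildeMc {f : ℝ → E3 → E3 → ℝ} {T : ℝ}
    (hf : ∀ t ∈ Icc 0 T, ∀ x v, 0 ≤ f t x v) : (1 + T) ^ 10 ^ 14 ≤ tildeMc f T := by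
  refine le_add_of_nonneg_right (Real.sSup_nonneg ?_)
  rintro _ ⟨t, ht, rfl⟩
  exact integral_nonneg fun p => mul_nonneg (by positivity) (hf t ht _ _)

theorem le_pow_of_rpow_inv_le {a b : ℝ} {n : ℕ} (ha : 0 ≤ a) (hn : n ≠ 0)
    (h : a ^ ((1 : ℝ) / n) ≤ b) : a ≤ b ^ n := by
  have := pow_le_pow_left₀ (by positivity) h n
  rwa [one_div, Real.rpow_inv_natCast_pow ha hn] at this

theorem cylindrical_spacetime_estimate_general (D : ℝ) :
    ∃ C : ℝ, ∀ (T : ℝ) (f : ℝ → E3 → E3 → ℝ), IsRVPSolution (Icc 0 T) f →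
      (∀ t ∈ Icc (0 : ℝ) T, ∀ x v, f t x v ≤ D) →
      (∀ t ∈ Icc (0 : ℝ) T, (∫ p : E3 × E3, (1 + ‖p.2‖) * f t p.1 p.2) ≤ D) →
      (∀ t ∈ Icc (0 : ℝ) T,
        Integrable (fun p : E3 × E3 => phaseWeight p ^ (10 ^ 7 : ℕ) * f t p.1 p.2) ∧
        (∫ p : E3 × E3, phaseWeight p ^ (10 ^ 7 : ℕ) * f t p.1 p.2) ≤ tildeMc f T) →
      ∀ l : ℝ, tildeMc f T ^ ((1 : ℝ) / (ncR - 1)) ≤ l →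
        ∫⁻ t in Icc 0 T, ∫⁻ p : E3 × E3, ENNReal.ofReal (axisWeight (2 * epsStar) p * f t p.1 p.2) ≤
          ENNReal.ofReal (C * l ^ (5 * epsC)) := by
  have hε : 0 < epsStar := by norm_num [epsStar, epsC]
  have hε1 : 2 * epsStar < 1 := by norm_num [epsStar, epsC]
  have hε3 : 3 * (2 * epsStar) ≤ 5 * epsC := by norm_num [epsStar, epsC]
  have hε5 : (1 : ℝ) / (10 ^ 7 : ℕ) ≤ 5 * epsC := by norm_num [epsC]
  refine ⟨2 * (D + 1) / (2 * epsStar) + (1 + D * ∫ p, axisKernel p), ?_⟩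
  intro T f hf hD h1D hmoment l hl
  rcases le_or_gt T 0 with hT | hT
  · rw [Measure.restrict_eq_zero.2 (by simp [hT]), lintegral_zero_measure]
    exact zero_le
  have hD0 : 0 ≤ D := (hf.1 0 (left_mem_Icc.2 hT.le) 0 0).trans (hD 0 (left_mem_Icc.2 hT.le) 0 0)
  have hK0 : 0 ≤ ∫ p, axisKernel p := integral_nonneg axisKernel_nonneg
  have hTM := one_add_pow_le_tildeMc hf.1
  have hM1 : 1 ≤ tildeMc f T := (one_le_pow₀ (le_add_of_nonneg_right hT.le)).trans hTM
  have hl1 : 1 ≤ l := (Real.one_le_rpow hM1 (by norm_num [ncR])).trans hl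
  have hncR : ncR - 1 = (10 ^ 7 - 1 : ℕ) := by norm_num [ncR]
  have hMl : tildeMc f T ≤ l ^ (10 ^ 7 - 1) :=
    le_pow_of_rpow_inv_le (zero_le_one.trans hM1) (by norm_num) (hncR ▸ hl)
  refine (hf.lintegral_axisWeight_le_rpow hT hD (by positivity) hε1 (n := 10 ^ 7) (by norm_num) hl1
    h1D (fun t ht => (hmoment t ht).1) (fun t ht => (hmoment t ht).2.trans hMl)
    (le_trans (by norm_num) (hTM.trans hMl))).trans (ENNReal.ofReal_le_ofReal ?_)
  rw [add_mul (2 * (D + 1) / _)]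
  gcongr

/-- Singular weighted space–time estimate in the cylindrical symmetry case:
`∫₀^T ∬ |v̸|^{2+2ε⋆} / (|x̸|^{1-2ε⋆} √(1+|v|²)) f ds dx dv ≲ 2^{5 ε M_T}`,
showing that particles do not concentrate near the `x₃`-axis. -/
theorem cylindrical_spacetime_estimate (D : ℝ) (hD : 0 < D) :
    ∃ C K₀ : ℝ, ∀ (T : ℝ) (f : ℝ → E3 → E3 → ℝ), 0 ≤ T →
      IsRVPSolution (Set.Icc 0 T) f →
      (∀ t ∈ Set.Icc (0 : ℝ) T, ∀ (θ : ℝ) (x v : E3),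
        f t (rotZ θ x) (rotZ θ v) = f t x v) →
      (∀ t ∈ Set.Icc (0 : ℝ) T, ∀ x v, f t x v ≤ D) →
      (∀ t ∈ Set.Icc (0 : ℝ) T,
        Integrable (fun p : E3 × E3 => (1 + ‖p.2‖) * f t p.1 p.2) volume) →
      (∀ t ∈ Set.Icc (0 : ℝ) T, (∫ p : E3 × E3, (1 + ‖p.2‖) * f t p.1 p.2) ≤ D) →
      (∀ t ∈ Set.Icc (0 : ℝ) T,
        Integrable (fun p : E3 × E3 => (1 + ‖p.2‖) ^ (10 ^ 7 : ℕ) * f t p.1 p.2) volume) →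
      BddAbove (momentNc f '' Set.Icc 0 T) →
      (∀ s ∈ Set.Icc (0 : ℝ) T,
        Integrable (fun p : E3 × E3 =>
          (1 + ‖p.1‖ + ‖p.2‖) ^ (10 ^ 7 : ℕ) * f s p.1 p.2) volume ∧
        (∫ p : E3 × E3, (1 + ‖p.1‖ + ‖p.2‖) ^ (10 ^ 7 : ℕ) * f s p.1 p.2) ≤ tildeMc f T) →
      ∀ M : ℕ, IsLeast {k : ℕ | tildeMc f T ^ ((1 : ℝ) / (ncR - 1)) ≤ (2 : ℝ) ^ k} M →
        K₀ ≤ (M : ℝ) →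
        (∫⁻ s in Set.Icc (0 : ℝ) T, ∫⁻ p : E3 × E3,
            ENNReal.ofReal (slashN p.2 ^ (2 + 2 * epsStar) * f s p.1 p.2 /
              (slashN p.1 ^ (1 - 2 * epsStar) * Real.sqrt (1 + ‖p.2‖ ^ 2)))) ≤
          ENNReal.ofReal (C * (2 : ℝ) ^ (5 * epsC * (M : ℝ))) := by
  obtain ⟨C, hC⟩ := cylindrical_spacetime_estimate_general D
  refine ⟨C, 0, fun T f _ hf _ hle _ h1D _ _ hmoment M hM _ => ?_⟩
  have hmain := hC T f hf hle h1D hmoment (2 ^ M) hM.1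
  simpa only [axisWeight, div_mul_eq_mul_div, ← Real.rpow_natCast_mul zero_le_two,
    mul_comm (M : ℝ)] using hmain
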